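/- arXiv:1106.4733 — 2 statements merged into one kernel-verified Lean document; each statement's English description precedes it below -/
import Mathlib

section
/- Let L be an even positive definite lattice, k ∈ ℤ, t ∈ ℚ with t > 0, D an even divisor of 24, and Q = 24/D. Let φ ∈ J_{k,L;t}(v_η^D × ν) be a holomorphic Jacobi form, where the Heisenberg character ν is assumed trivial if Q is odd. Let m ≥ 1 be an integer coprime to Q, and for each positive divisor a of m fix σ_a ∈ SL₂(ℤ) with σ_a ≡ (a^{−1}, 0; 0, a) mod Q. Then the function ψ(τ,𝔷) := Σ_{ad=m, a>0} Σ_{b mod d} a^k · v_η^D(σ_a) · φ((aτ+bQ)/d, a𝔷) is a holomorphic Jacobi form of weight k and index mt for L: ψ ∈ J_{k,L;mt}(v_{η,m}^D × ν), where v_{η,m}^D is the character of SL₂(ℤ) defined by v_{η,m}^D(A) := v_η^D(A_m) for any A_m ∈ SL₂(ℤ) with A_m·(1,0;0,m) ≡ (1,0;0,m)·A mod Q. Moreover the character v_{η,m}^D depends only on m mod Q. -/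
open Complex Matrix
open scoped Real BigOperators Classical

noncomputable section

abbrev SL2Z := Matrix.SpecialLinearGroup (Fin 2) ℤ

/-- The integral bilinear form attached to a Gram matrix `S`. -/
def bilinZ {ι : Type*} [Fintype ι] (S : Matrix ι ι ℤ) (x y : ι → ℤ) : ℤ :=
  ∑ i, ∑ j, x i * S i j * y j

def bilinQ {ι : Type*} [Fintype ι] (S : Matrix ι ι ℤ) (x y : ι → ℚ) : ℚ :=
  ∑ i, ∑ j, x i * (S i j : ℚ) * y j

def bilinR {ι : Type*} [Fintype ι] (S : Matrix ι ι ℤ) (x y : ι → ℝ) : ℝ :=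
  ∑ i, ∑ j, x i * (S i j : ℝ) * y j

def bilinC {ι : Type*} [Fintype ι] (S : Matrix ι ι ℤ) (x y : ι → ℂ) : ℂ :=
  ∑ i, ∑ j, x i * (S i j : ℂ) * y j

/-- `S` is the Gram matrix of an even positive definite lattice. -/
structure IsEvenPosDef {ι : Type*} [Fintype ι] (S : Matrix ι ι ℤ) : Prop where
  symm : S.IsSymm
  posdef : ∀ x : ι → ℚ, x ≠ 0 → 0 < bilinQ S x x
  even_diag : ∀ i, (2 : ℤ) ∣ S i i

/-- `l ∈ (1/2) L^∨`, written in lattice coordinates:  `2(l,x) ∈ ℤ` for every lattice vector. -/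
def InHalfDual {ι : Type*} [Fintype ι] (S : Matrix ι ι ℤ) (l : ι → ℚ) : Prop :=
  ∀ x : ι → ℤ, ∃ m : ℤ, 2 * bilinQ S l (fun i => (x i : ℚ)) = m

/-- `φ` is a holomorphic Jacobi form of weight `k` and index `t` for the lattice `(ℤ^ι, S)`
with `SL₂(ℤ)`-character (multiplier system) `χ`, Heisenberg character `ν`,
and Fourier coefficients `f`. -/
structure IsJacobiForm {ι : Type*} [Fintype ι] (S : Matrix ι ι ℤ) (k t : ℚ)
    (χ : SL2Z → ℂ) (ν : (ι → ℤ) → (ι → ℤ) → ℂ)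
    (f : ℚ × (ι → ℚ) → ℂ) (φ : ℂ → (ι → ℂ) → ℂ) : Prop where
  holo : DifferentiableOn ℂ (fun p : ℂ × (ι → ℂ) => φ p.1 p.2) {p | 0 < p.1.im}
  modular : ∀ A : SL2Z, ∀ τ : ℂ, 0 < τ.im → ∀ z : ι → ℂ,
    φ (((A.1 0 0 : ℂ) * τ + (A.1 0 1 : ℂ)) / ((A.1 1 0 : ℂ) * τ + (A.1 1 1 : ℂ)))
        (fun i => z i / ((A.1 1 0 : ℂ) * τ + (A.1 1 1 : ℂ)))
      = χ A * ((A.1 1 0 : ℂ) * τ + (A.1 1 1 : ℂ)) ^ (k : ℂ)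
        * Complex.exp ((π : ℂ) * I * (t : ℂ) * (A.1 1 0 : ℂ) * bilinC S z z
            / ((A.1 1 0 : ℂ) * τ + (A.1 1 1 : ℂ)))
        * φ τ z
  elliptic : ∀ x y : ι → ℤ, ∀ τ : ℂ, 0 < τ.im → ∀ z : ι → ℂ,
    φ τ (fun i => z i + (x i : ℂ) * τ + (y i : ℂ))
      = ν x y * Complex.exp (-((π : ℂ) * I * (t : ℂ))
            * ((bilinZ S x x : ℂ) * τ + 2 * bilinC S (fun i => (x i : ℂ)) z))
        * φ τ z
  support : ∀ p : ℚ × (ι → ℚ), f p ≠ 0 →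
    0 ≤ p.1 ∧ InHalfDual S p.2 ∧ 0 ≤ 2 * p.1 * t - bilinQ S p.2 p.2
  expansion : ∀ τ : ℂ, 0 < τ.im → ∀ z : ι → ℂ,
    HasSum (fun p : ℚ × (ι → ℚ) =>
        f p * Complex.exp (2 * (π : ℂ) * I *
          ((p.1 : ℂ) * τ + bilinC S (fun i => (p.2 i : ℂ)) z))) (φ τ z)

/-- The Fourier coefficients `f` are supported on indices of positive hyperbolic norm
(cusp form condition). -/
def IsCuspSupport {ι : Type*} [Fintype ι] (S : Matrix ι ι ℤ) (t : ℚ)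
    (f : ℚ × (ι → ℚ) → ℂ) : Prop :=
  ∀ p : ℚ × (ι → ℚ), f p ≠ 0 → 0 < 2 * p.1 * t - bilinQ S p.2 p.2

/-- `c` is a root of unity. -/
def HasFiniteOrder (c : ℂ) : Prop := ∃ N : ℕ, 0 < N ∧ c ^ N = 1

/-- The quadratic character mod 4. -/
def chi4 (n : ℤ) : ℂ := if n % 4 = 1 then 1 else if n % 4 = 3 then -1 else 0

/-- The classical Jacobi theta-series of characteristic `(1/2,1/2)`. -/
def jtheta (τ z : ℂ) : ℂ :=
  ∑' n : ℤ, chi4 n *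
    Complex.exp (2 * (π : ℂ) * I * (((n : ℂ) ^ 2 * τ) / 8 + (n : ℂ) * z / 2))

/-- The Dedekind eta function. -/
def dedekindEta (τ : ℂ) : ℂ :=
  Complex.exp ((π : ℂ) * I * τ / 12) *
    ∏' n : ℕ, (1 - Complex.exp (2 * (π : ℂ) * I * ((n : ℂ) + 1) * τ))

/-- Congruence condition `Am·(1,0;0,m) ≡ (1,0;0,m)·A  (mod Q)`. -/
def CongrCond (Q m : ℕ) (A Am : SL2Z) : Prop :=
  ∀ i j, (Am.1 * !![(1 : ℤ), 0; 0, (m : ℤ)]) i j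
      ≡ (!![(1 : ℤ), 0; 0, (m : ℤ)] * A.1) i j [ZMOD (Q : ℤ)]

/-- `σ_a ≡ (a⁻¹, 0; 0, a) (mod Q)`. -/
def SigmaCond (Q : ℕ) (a : ℕ) (σa : SL2Z) : Prop :=
  ∃ a' : ℤ, (a : ℤ) * a' ≡ 1 [ZMOD (Q : ℤ)] ∧
    σa.1 0 0 ≡ a' [ZMOD (Q : ℤ)] ∧ σa.1 0 1 ≡ 0 [ZMOD (Q : ℤ)] ∧
    σa.1 1 0 ≡ 0 [ZMOD (Q : ℤ)] ∧ σa.1 1 1 ≡ (a : ℤ) [ZMOD (Q : ℤ)]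

/-- The `m`-th Hecke translate `(φ|_{k,t} T_-^{(Q)}(m))(τ,𝔷)
    = ∑_{ad=m, a>0} ∑_{b mod d} a^k v_η^D(σ_a) φ((aτ+bQ)/d, a𝔷)`. -/
def heckeSum {ι : Type*} [Fintype ι] (φ : ℂ → (ι → ℂ) → ℂ) (vη : SL2Z → ℂ)
    (σ : ℕ → SL2Z) (k : ℤ) (Q m : ℕ) (τ : ℂ) (z : ι → ℂ) : ℂ :=
  ∑ a ∈ m.divisors, ∑ bb ∈ Finset.range (m / a),
    (a : ℂ) ^ k * vη (σ a)
      * φ (((a : ℂ) * τ + (bb : ℂ) * (Q : ℂ)) / ((m / a : ℕ) : ℂ)) (fun i => (a : ℂ) * z i)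

/-- The `m`-th term `m⁻¹(φ|_k T_-^{(Q)}(m)) e^{2πi(m/Q)ω}` of the lifting, as a function of
`(τ, 𝔷, ω)`; it is zero unless `m ≥ 1` and `m ≡ μ (mod Q)`. -/
def liftTerm {ι : Type*} [Fintype ι] (φ : ℂ → (ι → ℂ) → ℂ) (vη : SL2Z → ℂ)
    (σ : ℕ → SL2Z) (k : ℤ) (Q : ℕ) (μ : ℤ) (m : ℕ) (p : ℂ × (ι → ℂ) × ℂ) : ℂ :=
  if 1 ≤ m ∧ (m : ℤ) ≡ μ [ZMOD (Q : ℤ)] then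
    (m : ℂ)⁻¹ * heckeSum φ vη σ k Q m p.1 p.2.1
      * Complex.exp (2 * (π : ℂ) * I * ((m : ℂ) / (Q : ℂ)) * p.2.2)
  else 0

/-- The tube domain `H(L(N))` of the even lattice `L(N)`, `N = Qt`. -/
def tubeDom {ι : Type*} [Fintype ι] (S : Matrix ι ι ℤ) (N : ℚ) : Set (ℂ × (ι → ℂ) × ℂ) :=
  {p | 0 < p.1.im ∧ 0 < p.2.2.im ∧
    (N : ℝ) * bilinR S (fun i => (p.2.1 i).im) (fun i => (p.2.1 i).im)
      < 2 * p.1.im * p.2.2.im}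

/-!
Modulo `Q`, the representative `(a, bQ; 0, d)` of an `SL₂(ℤ)`-orbit of integral matrices of
determinant `m` becomes `σ_a⁻¹ · (1, 0; 0, m)`. Right multiplication by `A ∈ SL₂(ℤ)` permutes these
representatives up to left factors `B ∈ SL₂(ℤ)`, and comparing both sides modulo `Q` gives
`σ_a B ≡ A_m σ_{a'}`. A character trivial on `Γ(Q)` therefore takes the same value on `σ_a B` and
`A_m σ_{a'}`, which is the modular transformation law of `ψ`. The character `χ = v_η^D` is trivial
on `Γ(Q)`: its value at `T` is a `Q`-th root of unity, and `χ(A)` is the power of `χ(T)` whose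
exponent is a polynomial in the entries of `A` that vanishes at the identity.

In the elliptic law of the summand attached to `(a, bQ; 0, d)`, the pair `(x, y)` is replaced by
`(dx, ay - bQx)`. Comparing translates shows that `ν` is additive if `φ ≠ 0`, and `-1 ∈ SL₂(ℤ)`
shows that it takes values `±1`, so for even `Q`, where `a` and `d` are odd, nothing changes. For
odd `Q` invariance under `T` forces the remaining factor `exp(-πit(x, x))` to be `1`.
-/

/-! ### Möbius action of integer matrices -/

/-- The denominator `J(M, τ) = cτ + d` of the Möbius action of `M = (a, b; c, d)`. -/
def automorphyFactor (M : Matrix (Fin 2) (Fin 2) ℤ) (τ : ℂ) : ℂ :=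
  (M 1 0 : ℂ) * τ + (M 1 1 : ℂ)

/-- The Möbius action `Mτ = (aτ + b) / (cτ + d)`, as a map on all of `ℂ`. -/
def moebius (M : Matrix (Fin 2) (Fin 2) ℤ) (τ : ℂ) : ℂ :=
  ((M 0 0 : ℂ) * τ + (M 0 1 : ℂ)) / automorphyFactor M τ

section Moebius

variable {M N : Matrix (Fin 2) (Fin 2) ℤ} {τ : ℂ}

lemma automorphyFactor_ne_zero (hM : M.det ≠ 0) (hτ : 0 < τ.im) : automorphyFactor M τ ≠ 0 := by
  intro h
  have hc : M 1 0 = 0 := by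
    have him := congrArg Complex.im h
    simpa [automorphyFactor, hτ.ne'] using him
  have hd : M 1 1 = 0 := by simpa [automorphyFactor, hc] using h
  exact hM (by rw [Matrix.det_fin_two, hc, hd]; ring)

lemma moebius_im (hM : M.det ≠ 0) (hτ : 0 < τ.im) :
    (moebius M τ).im = M.det * τ.im / Complex.normSq (automorphyFactor M τ) := by
  have hJ : Complex.normSq (automorphyFactor M τ) ≠ 0 :=
    (Complex.normSq_pos.mpr (automorphyFactor_ne_zero hM hτ)).ne'
  rw [moebius, Complex.div_im, Matrix.det_fin_two]
  field_simp
  simp only [automorphyFactor, add_re, add_im, mul_re, mul_im, intCast_re, intCast_im]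
  push_cast
  ring

lemma moebius_im_pos (hM : 0 < M.det) (hτ : 0 < τ.im) : 0 < (moebius M τ).im := by
  have hJ := Complex.normSq_pos.mpr (automorphyFactor_ne_zero hM.ne' hτ)
  rw [moebius_im hM.ne' hτ]
  positivity

lemma automorphyFactor_mul (hN : N.det ≠ 0) (hτ : 0 < τ.im) :
    automorphyFactor (M * N) τ = automorphyFactor M (moebius N τ) * automorphyFactor N τ := by
  have hJ := automorphyFactor_ne_zero hN hτ
  rw [automorphyFactor, automorphyFactor, moebius]
  field_simp
  simp only [automorphyFactor, Matrix.mul_apply, Fin.sum_univ_two]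
  push_cast
  ring

lemma moebius_mul (hN : N.det ≠ 0) (hτ : 0 < τ.im) :
    moebius (M * N) τ = moebius M (moebius N τ) := by
  have hJ := automorphyFactor_ne_zero hN hτ
  rw [moebius, automorphyFactor_mul hN hτ, moebius.eq_1 M, div_mul_eq_div_div_swap]
  congr 1
  rw [moebius, mul_div_assoc', div_add' _ _ _ hJ]
  simp only [automorphyFactor, Matrix.mul_apply, Fin.sum_univ_two]
  push_cast
  ring

lemma moebius_one : moebius 1 τ = τ := by simp [moebius, automorphyFactor]

lemma automorphyFactor_one : automorphyFactor 1 τ = 1 := by simp [automorphyFactor]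

lemma automorphyFactor_slTwo_ne_zero (A : SL2Z) (hτ : 0 < τ.im) :
    automorphyFactor A.1 τ ≠ 0 :=
  automorphyFactor_ne_zero (by rw [A.2]; exact one_ne_zero) hτ

end Moebius

/-! ### Multiplier systems -/

/-- `v` is the multiplier system of `F`, regarded as a modular form of integral weight `r` on the
upper half-plane. -/
def IsMultiplierSystem (r : ℕ) (F : ℂ → ℂ) (v : SL2Z → ℂ) : Prop :=
  ∀ A : SL2Z, ∀ τ : ℂ, 0 < τ.im → F (moebius A.1 τ) = v A * automorphyFactor A.1 τ ^ r * F τ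

namespace IsMultiplierSystem

variable {r : ℕ} {F : ℂ → ℂ} {v : SL2Z → ℂ} {τ : ℂ}

lemma map_one (hv : IsMultiplierSystem r F v) (hτ : 0 < τ.im) (hF : F τ ≠ 0) : v 1 = 1 := by
  have h := hv 1 τ hτ
  rw [Matrix.SpecialLinearGroup.coe_one, moebius_one, automorphyFactor_one, one_pow, mul_one] at h
  exact (mul_eq_right₀ hF).mp h.symm

lemma map_mul (hv : IsMultiplierSystem r F v) (hτ : 0 < τ.im) (hF : F τ ≠ 0) (A B : SL2Z) :
    v (A * B) = v A * v B := by
  have hdet (C : SL2Z) : C.1.det ≠ 0 := by rw [C.2]; exact one_ne_zero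
  have hBτ : 0 < (moebius B.1 τ).im := moebius_im_pos (by rw [B.2]; exact one_pos) hτ
  have hJ : automorphyFactor A.1 (moebius B.1 τ) ^ r * automorphyFactor B.1 τ ^ r * F τ ≠ 0 :=
    mul_ne_zero (mul_ne_zero (pow_ne_zero _ (automorphyFactor_slTwo_ne_zero A hBτ))
      (pow_ne_zero _ (automorphyFactor_slTwo_ne_zero B hτ))) hF
  have hAB := hv (A * B) τ hτ
  rw [Matrix.SpecialLinearGroup.coe_mul, moebius_mul (hdet B) hτ, hv A _ hBτ, hv B τ hτ,
    automorphyFactor_mul (hdet B) hτ, mul_pow] at hAB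
  apply mul_right_cancel₀ hJ
  linear_combination -hAB

/-- The multiplier system of a nonzero form of integral weight, as a homomorphism. -/
def toMonoidHom (hv : IsMultiplierSystem r F v) (hτ : 0 < τ.im) (hF : F τ ≠ 0) : SL2Z →* ℂ where
  toFun := v
  map_one' := hv.map_one hτ hF
  map_mul' := hv.map_mul hτ hF

end IsMultiplierSystem

/-! ### Characters of `SL₂(ℤ)` -/

/-- A polynomial in the entries of a matrix of determinant `1` which, modulo `12`, realises the
isomorphism of the abelianization of `SL₂(ℤ)` with `ℤ/12ℤ` sending `T` to `1`. -/
def abelianizationPoly {R : Type*} [CommRing R] (a b c d : R) : R :=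
  (1 - c ^ 2) * (b * d + 3 * (c - 1) * d + c + 3) + c * (a + d - 3)

/-- The value of `abelianizationPoly` at an element of `SL₂(ℤ)`. -/
def abelianizationExponent (A : SL2Z) : ℤ :=
  abelianizationPoly (A.1 0 0) (A.1 0 1) (A.1 1 0) (A.1 1 1)

lemma intCast_abelianizationPoly {R : Type*} [CommRing R] (a b c d : ℤ) :
    ((abelianizationPoly a b c d : ℤ) : R) = abelianizationPoly (a : R) b c d := by
  simp [abelianizationPoly]

lemma modEq_twelve_iff {x y : ℤ} :
    x ≡ y [ZMOD 12] ↔ (x : ZMod 4) = y ∧ (x : ZMod 3) = y := by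
  rw [ZMod.intCast_eq_intCast_iff, ZMod.intCast_eq_intCast_iff]
  exact (Int.modEq_and_modEq_iff_modEq_mul (m := 4) (n := 3) (by norm_num)).symm

lemma slTwo_det_eq_one (A : SL2Z) (R : Type*) [CommRing R] :
    (A.1 0 0 : R) * A.1 1 1 - A.1 0 1 * A.1 1 0 = 1 := by
  exact_mod_cast congrArg (Int.cast : ℤ → R) (A.1.det_fin_two ▸ A.2)

lemma abelianizationExponent_mul_T (A : SL2Z) :
    abelianizationExponent (A * ModularGroup.T) ≡ abelianizationExponent A + 1 [ZMOD 12] := by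
  have h4 : ∀ a b c d : ZMod 4, a * d - b * c = 1 →
      abelianizationPoly a (a + b) c (c + d) = abelianizationPoly a b c d + 1 := by decide
  have h3 : ∀ a b c d : ZMod 3, a * d - b * c = 1 →
      abelianizationPoly a (a + b) c (c + d) = abelianizationPoly a b c d + 1 := by decide
  rw [abelianizationExponent, abelianizationExponent, modEq_twelve_iff]
  simp only [Matrix.SpecialLinearGroup.coe_mul, ModularGroup.coe_T, Matrix.mul_apply,
    Fin.sum_univ_two, Int.cast_add, intCast_abelianizationPoly]
  constructor
  · simpa using h4 _ _ _ _ (slTwo_det_eq_one A (ZMod 4))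
  · simpa using h3 _ _ _ _ (slTwo_det_eq_one A (ZMod 3))

lemma abelianizationExponent_mul_S (A : SL2Z) :
    abelianizationExponent (A * ModularGroup.S) ≡ abelianizationExponent A - 3 [ZMOD 12] := by
  have h4 : ∀ a b c d : ZMod 4, a * d - b * c = 1 →
      abelianizationPoly b (-a) d (-c) = abelianizationPoly a b c d - 3 := by decide
  have h3 : ∀ a b c d : ZMod 3, a * d - b * c = 1 →
      abelianizationPoly b (-a) d (-c) = abelianizationPoly a b c d - 3 := by decide
  rw [abelianizationExponent, abelianizationExponent, modEq_twelve_iff]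
  simp only [Matrix.SpecialLinearGroup.coe_mul, ModularGroup.coe_S, Matrix.mul_apply,
    Fin.sum_univ_two, Int.cast_sub, intCast_abelianizationPoly]
  constructor
  · simpa using h4 _ _ _ _ (slTwo_det_eq_one A (ZMod 4))
  · simpa using h3 _ _ _ _ (slTwo_det_eq_one A (ZMod 3))

section Characters

variable {G : Type*} [CommGroup G] (χ : SL2Z →* G)

lemma map_S_eq_map_T_zpow : χ ModularGroup.S = χ ModularGroup.T ^ (-3 : ℤ) := by
  have hrel : (ModularGroup.S * ModularGroup.T) ^ 3 = ModularGroup.S ^ 2 := by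
    apply Subtype.ext
    simp [pow_succ, ModularGroup.coe_S, ModularGroup.coe_T]
  have h := congrArg χ hrel
  rw [map_pow, map_mul, map_pow, mul_pow, pow_succ _ 2, mul_assoc, mul_eq_left] at h
  rw [_root_.zpow_neg, eq_inv_iff_mul_eq_one]
  exact_mod_cast h

lemma map_T_pow_twelve : χ ModularGroup.T ^ 12 = 1 := by
  have hS : ModularGroup.S ^ 4 = 1 := by
    apply Subtype.ext
    simp [pow_succ, ModularGroup.coe_S, Matrix.one_fin_two]
  have h := congrArg χ hS
  rw [map_pow, map_S_eq_map_T_zpow, map_one, _root_.zpow_neg, inv_pow, inv_eq_one] at h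
  rw [pow_mul (χ ModularGroup.T) 3 4]
  exact_mod_cast h

lemma map_T_zpow_congr {n : ℕ} (hn : χ ModularGroup.T ^ n = 1) {x y : ℤ}
    (h : x ≡ y [ZMOD n]) : χ ModularGroup.T ^ x = χ ModularGroup.T ^ y :=
  zpow_eq_zpow_iff_modEq.mpr (h.of_dvd (by exact_mod_cast orderOf_dvd_of_pow_eq_one hn))

theorem map_eq_map_T_zpow (A : SL2Z) : χ A = χ ModularGroup.T ^ abelianizationExponent A := by
  have hmul_T (B : SL2Z) : χ ModularGroup.T ^ abelianizationExponent (B * ModularGroup.T)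
      = χ ModularGroup.T ^ abelianizationExponent B * χ ModularGroup.T := by
    rw [map_T_zpow_congr χ (map_T_pow_twelve χ) (abelianizationExponent_mul_T B),
      _root_.zpow_add_one]
  have hmul_S (B : SL2Z) : χ ModularGroup.T ^ abelianizationExponent (B * ModularGroup.S)
      = χ ModularGroup.T ^ abelianizationExponent B * χ ModularGroup.S := by
    rw [map_T_zpow_congr χ (map_T_pow_twelve χ) (abelianizationExponent_mul_S B), sub_eq_add_neg,
      _root_.zpow_add, map_S_eq_map_T_zpow]
  have hmem : A ∈ Subgroup.closure {ModularGroup.S, ModularGroup.T} := by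
    rw [SpecialLinearGroup.SL2Z_generators]
    exact Subgroup.mem_top A
  induction hmem using Subgroup.closure_induction_right with
  | one => simp [abelianizationExponent, abelianizationPoly]
  | mul_right B _ g hg ih =>
    rcases hg with rfl | rfl
    · rw [map_mul, hmul_S, ih]
    · rw [map_mul, hmul_T, ih]
  | mul_inv_cancel B _ g hg ih =>
    rcases hg with rfl | rfl
    · rw [map_mul, map_inv, ih, mul_inv_eq_iff_eq_mul, ← hmul_S, inv_mul_cancel_right]
    · rw [map_mul, map_inv, ih, mul_inv_eq_iff_eq_mul, ← hmul_T, inv_mul_cancel_right]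

lemma Gamma_le_ker_of_map_T_pow_eq_one {Q : ℕ} (hT : χ ModularGroup.T ^ Q = 1) :
    CongruenceSubgroup.Gamma Q ≤ χ.ker := by
  intro A hA
  obtain ⟨h00, h01, h10, h11⟩ := CongruenceSubgroup.Gamma_mem.mp hA
  have hexp : abelianizationExponent A ≡ 0 [ZMOD Q] := by
    rw [← ZMod.intCast_eq_intCast_iff, abelianizationExponent, intCast_abelianizationPoly,
      h00, h01, h10, h11, abelianizationPoly]
    push_cast
    ring
  rw [MonoidHom.mem_ker, map_eq_map_T_zpow, map_T_zpow_congr χ hT hexp, zpow_zero]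

end Characters

/-! ### The Dedekind eta function -/

lemma dedekindEta_eq_modularForm_eta : dedekindEta = ModularForm.eta := by
  ext τ
  rw [dedekindEta, ModularForm.eta, Function.Periodic.qParam]
  congr 1
  · congr 1
    push_cast
    ring
  · simp only [ModularForm.eta_q_eq_cexp]

lemma dedekindEta_ne_zero {τ : ℂ} (hτ : 0 < τ.im) : dedekindEta τ ≠ 0 :=
  dedekindEta_eq_modularForm_eta ▸ ModularForm.eta_ne_zero hτ

lemma dedekindEta_add_one (τ : ℂ) :
    dedekindEta (τ + 1) = Complex.exp ((π : ℂ) * I / 12) * dedekindEta τ := by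
  rw [dedekindEta, dedekindEta, ← mul_assoc, ← Complex.exp_add]
  congr 1
  · congr 1
    ring
  · refine tprod_congr fun n => ?_
    have hperiod : 2 * (π : ℂ) * I * ((n : ℂ) + 1) * (τ + 1)
        = 2 * (π : ℂ) * I * ((n : ℂ) + 1) * τ + ((n + 1 : ℕ) : ℂ) * (2 * π * I) := by
      push_cast
      ring
    rw [hperiod, Complex.exp_add, Complex.exp_nat_mul_two_pi_mul_I, mul_one]

/-- The character `v_η^D` of `SL₂(ℤ)`, as a homomorphism. -/
def etaCharacter {D : ℕ} {vη : SL2Z → ℂ}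
    (hvη : IsMultiplierSystem (D / 2) (fun τ => dedekindEta τ ^ D) vη) : SL2Z →* ℂ :=
  hvη.toMonoidHom (τ := I) (by simp) (pow_ne_zero D (dedekindEta_ne_zero (by simp)))

lemma etaCharacter_T {D : ℕ} {vη : SL2Z → ℂ}
    (hvη : IsMultiplierSystem (D / 2) (fun τ => dedekindEta τ ^ D) vη) :
    etaCharacter hvη ModularGroup.T = Complex.exp ((π : ℂ) * I / 12) ^ D := by
  have hη : dedekindEta I ^ D ≠ 0 := pow_ne_zero D (dedekindEta_ne_zero (by simp))
  have h := hvη ModularGroup.T I (by simp)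
  simp only [moebius, automorphyFactor, ModularGroup.coe_T, Matrix.of_apply, Matrix.cons_val',
    Matrix.cons_val_zero, Matrix.cons_val_one, Matrix.cons_val_fin_one, Int.cast_one, Int.cast_zero,
    one_mul, zero_mul, zero_add, div_one, one_pow, mul_one] at h
  rw [dedekindEta_add_one, mul_pow] at h
  exact (mul_right_cancel₀ hη h).symm

lemma Gamma_le_ker_etaCharacter {D Q : ℕ} (hDQ : D * Q = 24) {vη : SL2Z → ℂ}
    (hvη : IsMultiplierSystem (D / 2) (fun τ => dedekindEta τ ^ D) vη) :
    CongruenceSubgroup.Gamma Q ≤ (etaCharacter hvη).ker := by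
  have hT : etaCharacter hvη ModularGroup.T ^ Q = 1 := by
    rw [etaCharacter_T, ← pow_mul, hDQ, ← Complex.exp_nat_mul, Complex.exp_eq_one_iff]
    exact ⟨1, by push_cast; ring⟩
  have hker := Gamma_le_ker_of_map_T_pow_eq_one (etaCharacter hvη).toHomUnits (Units.ext hT)
  exact fun A hA => congrArg Units.val (hker hA)

/-! ### Integral matrices of determinant `m` -/

/-- The index set of the Hecke operator: the pairs `(a, b)` with `a ∣ m` and `0 ≤ b < m / a`. -/
def heckeIndex (m : ℕ) : Finset ((_ : ℕ) × ℕ) :=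
  m.divisors.sigma fun a => Finset.range (m / a)

/-- The representative `(a, bQ; 0, d)`, `ad = m`, of an orbit of `SL₂(ℤ)`, acting from the left,
on the integral matrices of determinant `m`. -/
def heckeMatrix (Q m : ℕ) (x : (_ : ℕ) × ℕ) : Matrix (Fin 2) (Fin 2) ℤ :=
  !![(x.1 : ℤ), (x.2 : ℤ) * (Q : ℤ); 0, ((m / x.1 : ℕ) : ℤ)]

/-- Reduction modulo `Q` of integral matrices. -/
abbrev reduction (Q : ℕ) : Matrix (Fin 2) (Fin 2) ℤ →+* Matrix (Fin 2) (Fin 2) (ZMod Q) :=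
  (Int.castRingHom (ZMod Q)).mapMatrix

lemma slTwo_mul_coe_inv (A : SL2Z) : A.1 * (A⁻¹).1 = 1 := by
  rw [← Matrix.SpecialLinearGroup.coe_mul, mul_inv_cancel, Matrix.SpecialLinearGroup.coe_one]

lemma slTwo_coe_inv_mul (A : SL2Z) : (A⁻¹).1 * A.1 = 1 := by
  rw [← Matrix.SpecialLinearGroup.coe_mul, inv_mul_cancel, Matrix.SpecialLinearGroup.coe_one]

lemma map_eq_of_reduction_eq {M : Type*} [Monoid M] {χ : SL2Z →* M} {Q : ℕ}
    (hχ : CongruenceSubgroup.Gamma Q ≤ χ.ker) {A B : SL2Z}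
    (hAB : reduction Q A.1 = reduction Q B.1) : χ A = χ B := by
  have hmem : A * B⁻¹ ∈ CongruenceSubgroup.Gamma Q := by
    rw [CongruenceSubgroup.Gamma_mem', map_mul, map_inv, mul_inv_eq_one]
    exact Subtype.ext hAB
  calc χ A = χ (A * B⁻¹) * χ B := by rw [← map_mul, inv_mul_cancel_right]
    _ = χ B := by rw [MonoidHom.mem_ker.mp (hχ hmem), one_mul]

lemma exists_lt_eq_mul_add_mul {d Q : ℕ} (hd : 0 < d) (hdQ : d.Coprime Q) (n : ℤ) :
    ∃ b < d, ∃ j : ℤ, n = b * Q + j * d := by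
  have : NeZero d := ⟨hd.ne'⟩
  let b : ZMod d := n * (Q : ZMod d)⁻¹
  have hb : b * (Q : ZMod d) = n := by
    rw [mul_assoc, mul_comm _ (Q : ZMod d), ZMod.coe_mul_inv_eq_one Q hdQ.symm, mul_one]
  have hdvd : (d : ℤ) ∣ n - b.val * Q := by
    rw [← ZMod.intCast_zmod_eq_zero_iff_dvd]
    push_cast
    rw [ZMod.natCast_zmod_val, hb, sub_self]
  obtain ⟨j, hj⟩ := hdvd
  exact ⟨b.val, b.val_lt, j, by linear_combination hj⟩

section HeckeMatrix

variable {Q m : ℕ} {x y : (_ : ℕ) × ℕ}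

lemma mem_heckeIndex : x ∈ heckeIndex m ↔ (x.1 ∣ m ∧ m ≠ 0) ∧ x.2 < m / x.1 := by
  simp [heckeIndex]

lemma dvd_of_mem_heckeIndex (hx : x ∈ heckeIndex m) : x.1 ∣ m := (mem_heckeIndex.mp hx).1.1

lemma fst_pos_of_mem_heckeIndex (hx : x ∈ heckeIndex m) : 0 < x.1 :=
  Nat.pos_of_dvd_of_pos (dvd_of_mem_heckeIndex hx)
    (Nat.pos_of_ne_zero (mem_heckeIndex.mp hx).1.2)

lemma div_pos_of_mem_heckeIndex (hx : x ∈ heckeIndex m) : 0 < m / x.1 :=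
  (Nat.zero_le _).trans_lt (mem_heckeIndex.mp hx).2

lemma det_heckeMatrix (hx : x ∈ heckeIndex m) : (heckeMatrix Q m x).det = m := by
  rw [heckeMatrix, Matrix.det_fin_two_of, mul_zero, sub_zero]
  exact_mod_cast Nat.mul_div_cancel' (dvd_of_mem_heckeIndex hx)

lemma exists_eq_slTwo_mul_heckeMatrix_of_apply_eq_zero (hm : 0 < m) (hcop : m.Coprime Q)
    {N : Matrix (Fin 2) (Fin 2) ℤ} (hdet : N.det = m) (h10 : N 1 0 = 0) (h00 : 0 < N 0 0) :
    ∃ x ∈ heckeIndex m, ∃ B : SL2Z, N = B.1 * heckeMatrix Q m x := by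
  rw [Matrix.det_fin_two, h10, mul_zero, sub_zero] at hdet
  lift N 0 0 to ℕ using h00.le with a ha
  have ha0 : 0 < a := by exact_mod_cast h00
  lift N 1 1 to ℕ using by nlinarith with d hd
  have had : a * d = m := by exact_mod_cast hdet
  have hd0 : 0 < d := Nat.pos_of_mul_pos_left (had ▸ hm)
  have hdQ : d.Coprime Q := hcop.coprime_dvd_left ⟨a, by rw [← had, mul_comm]⟩
  have hma : m / a = d := by rw [← had, Nat.mul_div_cancel_left d ha0]
  obtain ⟨b, hb, j, hj⟩ := exists_lt_eq_mul_add_mul hd0 hdQ (N 0 1)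
  refine ⟨⟨a, b⟩, mem_heckeIndex.mpr ⟨⟨⟨d, had.symm⟩, hm.ne'⟩, hma.symm ▸ hb⟩,
    ModularGroup.T ^ j, ?_⟩
  rw [N.eta_fin_two, heckeMatrix, hma, ModularGroup.coe_T_zpow, h10, hj, ← ha, ← hd]
  simp

/-- The Euclidean algorithm of `FixedDetMatrices.induction_on` brings a matrix to upper triangular
form; translations by `T` then make its upper right entry a multiple of `Q`. -/
theorem exists_eq_slTwo_mul_heckeMatrix (hm : 0 < m) (hcop : m.Coprime Q)
    {N : Matrix (Fin 2) (Fin 2) ℤ} (hN : N.det = m) :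
    ∃ x ∈ heckeIndex m, ∃ B : SL2Z, N = B.1 * heckeMatrix Q m x := by
  have hstep (g : SL2Z) (N : FixedDetMatrix (Fin 2) ℤ m)
      (h : ∃ x ∈ heckeIndex m, ∃ B : SL2Z, N.1 = B.1 * heckeMatrix Q m x) :
      ∃ x ∈ heckeIndex m, ∃ B : SL2Z, (g • N).1 = B.1 * heckeMatrix Q m x := by
    obtain ⟨x, hx, B, hB⟩ := h
    refine ⟨x, hx, g * B, ?_⟩
    rw [FixedDetMatrices.smul_coe, hB, Matrix.SpecialLinearGroup.coe_mul, Matrix.mul_assoc]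
  exact FixedDetMatrices.induction_on (A := ⟨N, hN⟩)
    (C := fun N => ∃ x ∈ heckeIndex m, ∃ B : SL2Z, N.1 = B.1 * heckeMatrix Q m x)
    (by exact_mod_cast hm.ne')
    (fun N h10 h00 _ _ =>
      exists_eq_slTwo_mul_heckeMatrix_of_apply_eq_zero hm hcop N.2 h10 h00)
    (hstep ModularGroup.S) (hstep ModularGroup.T)

lemma slTwo_apply_zero_zero_eq_one {C : SL2Z} (h10 : C.1 1 0 = 0) (h00 : 0 < C.1 0 0) :
    C.1 0 0 = 1 := by
  have hdet := slTwo_det_eq_one C ℤ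
  rw [h10] at hdet
  rcases Int.eq_one_or_neg_one_of_mul_eq_one (by simpa using hdet) with h | h <;> omega

theorem eq_of_heckeMatrix_eq_slTwo_mul (hcop : m.Coprime Q) (hx : x ∈ heckeIndex m)
    (hy : y ∈ heckeIndex m) (C : SL2Z) (h : heckeMatrix Q m x = C.1 * heckeMatrix Q m y) :
    x = y := by
  have hentries := fun i j => congrFun (congrFun h i) j
  simp only [heckeMatrix, Matrix.mul_apply, Fin.sum_univ_two, Fin.forall_fin_two, Matrix.of_apply,
    Matrix.cons_val', Matrix.cons_val_zero, Matrix.cons_val_one, Matrix.cons_val_fin_one,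
    mul_zero, add_zero] at hentries
  obtain ⟨⟨h00, h01⟩, h10, -⟩ := hentries
  have hxpos := fst_pos_of_mem_heckeIndex hx
  have hypos := fst_pos_of_mem_heckeIndex hy
  have hC10 : C.1 1 0 = 0 := (mul_eq_zero_iff_right (by positivity)).mp h10.symm
  have hC00 : C.1 0 0 = 1 := slTwo_apply_zero_zero_eq_one hC10
    (pos_of_mul_pos_left (by rw [← h00]; positivity) (by positivity))
  rw [hC00, one_mul] at h00 h01
  have hfst : x.1 = y.1 := by exact_mod_cast h00
  have hdQ : IsCoprime ((m / y.1 : ℕ) : ℤ) Q :=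
    Nat.isCoprime_iff_coprime.mpr
      (hcop.coprime_dvd_left (Nat.div_dvd_of_dvd (dvd_of_mem_heckeIndex hy)))
  have hdvd : ((m / y.1 : ℕ) : ℤ) ∣ x.2 - y.2 :=
    hdQ.dvd_of_dvd_mul_right ⟨C.1 0 1, by linear_combination h01⟩
  have hxlt := (mem_heckeIndex.mp hx).2
  have hylt := (mem_heckeIndex.mp hy).2
  rw [hfst] at hxlt
  have hsnd : (x.2 : ℤ) - y.2 = 0 :=
    Int.eq_zero_of_abs_lt_dvd hdvd (by rw [abs_lt]; constructor <;> omega)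
  exact Sigma.ext hfst (heq_of_eq (by omega))

theorem exists_perm_heckeMatrix_mul (hm : 0 < m) (hcop : m.Coprime Q) (A : SL2Z) :
    ∃ e : Equiv.Perm (heckeIndex m), ∀ x : heckeIndex m, ∃ B : SL2Z,
      heckeMatrix Q m x * A.1 = B.1 * heckeMatrix Q m (e x) := by
  have hdecomp (x : heckeIndex m) : ∃ y : heckeIndex m, ∃ B : SL2Z,
      heckeMatrix Q m x * A.1 = B.1 * heckeMatrix Q m y := by
    obtain ⟨y, hy, B, hB⟩ := exists_eq_slTwo_mul_heckeMatrix (N := heckeMatrix Q m x * A.1) hm hcop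
      (by rw [Matrix.det_mul, det_heckeMatrix x.2, A.2, mul_one])
    exact ⟨⟨y, hy⟩, B, hB⟩
  choose e B hB using hdecomp
  have he : Function.Injective e := by
    intro x x' hxx'
    refine Subtype.ext (eq_of_heckeMatrix_eq_slTwo_mul hcop x.2 x'.2 (B x * (B x')⁻¹) ?_)
    calc heckeMatrix Q m x
        = heckeMatrix Q m x * A.1 * (A⁻¹).1 := by
          rw [Matrix.mul_assoc, slTwo_mul_coe_inv, Matrix.mul_one]
      _ = (B x).1 * (((B x')⁻¹).1 * (B x').1) * heckeMatrix Q m (e x') * (A⁻¹).1 := by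
          rw [slTwo_coe_inv_mul, Matrix.mul_one, hB, hxx']
      _ = (B x * (B x')⁻¹).1 * (heckeMatrix Q m x' * A.1) * (A⁻¹).1 := by
          rw [hB x', Matrix.SpecialLinearGroup.coe_mul]
          simp only [Matrix.mul_assoc]
      _ = (B x * (B x')⁻¹).1 * heckeMatrix Q m x' := by
          rw [Matrix.mul_assoc, Matrix.mul_assoc, slTwo_mul_coe_inv, Matrix.mul_one]
  exact ⟨Equiv.ofBijective e (Finite.injective_iff_bijective.mp he), fun x => ⟨B x, hB x⟩⟩

end HeckeMatrix

/-! ### The twisted character -/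

section Congruence

variable {Q m : ℕ}

lemma congrCond_iff {A Am : SL2Z} : CongrCond Q m A Am ↔
    reduction Q Am.1 * reduction Q !![1, 0; 0, (m : ℤ)]
      = reduction Q !![1, 0; 0, (m : ℤ)] * reduction Q A.1 := by
  rw [← map_mul, ← map_mul, ← Matrix.ext_iff]
  exact forall₂_congr fun i j => (ZMod.intCast_eq_intCast_iff _ _ Q).symm

lemma isUnit_reduction_of_det_eq (hcop : m.Coprime Q) {N : Matrix (Fin 2) (Fin 2) ℤ}
    (hN : N.det = m) : IsUnit (reduction Q N) := by
  rw [Matrix.isUnit_iff_isUnit_det, ← RingHom.map_det, hN, map_natCast]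
  exact (ZMod.isUnit_iff_coprime m Q).mpr hcop

lemma det_one_zero_zero_natCast (m : ℕ) : (!![1, 0; 0, (m : ℤ)]).det = m := by simp

lemma reduction_eq_of_congrCond (hcop : m.Coprime Q) {m' : ℕ} (hm' : (m' : ℤ) ≡ m [ZMOD Q])
    {A Am Am' : SL2Z} (h : CongrCond Q m A Am) (h' : CongrCond Q m' A Am') :
    reduction Q Am.1 = reduction Q Am'.1 := by
  have hδ : reduction Q !![1, 0; 0, (m' : ℤ)] = reduction Q !![1, 0; 0, (m : ℤ)] := by
    have hcast := (ZMod.intCast_eq_intCast_iff _ _ Q).mpr hm'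
    ext i j
    fin_cases i <;> fin_cases j <;> simp_all
  rw [congrCond_iff] at h h'
  rw [hδ] at h'
  exact (isUnit_reduction_of_det_eq hcop (det_one_zero_zero_natCast m)).mul_right_cancel
    (h.trans h'.symm)

lemma reduction_sigma_mul_heckeMatrix {x : (_ : ℕ) × ℕ} (hx : x ∈ heckeIndex m) {σx : SL2Z}
    (hσx : SigmaCond Q x.1 σx) :
    reduction Q σx.1 * reduction Q (heckeMatrix Q m x) = reduction Q !![1, 0; 0, (m : ℤ)] := by
  obtain ⟨a', ha', h00, h01, h10, h11⟩ := hσx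
  rw [← ZMod.intCast_eq_intCast_iff] at ha' h00 h01 h10 h11
  have had : (x.1 : ZMod Q) * (m / x.1 : ℕ) = m := by
    exact_mod_cast congrArg (Nat.cast : ℕ → ZMod Q)
      (Nat.mul_div_cancel' (dvd_of_mem_heckeIndex hx))
  rw [heckeMatrix]
  generalize m / x.1 = d at had
  push_cast [mul_comm] at ha' h01 h10 h11
  ext i j
  fin_cases i <;> fin_cases j <;>
    simp [Matrix.mul_apply, Fin.sum_univ_two, h00, h01, h10, h11, ha', had]

variable {σ : ℕ → SL2Z}

theorem exists_congrCond (hm : 0 < m) (hcop : m.Coprime Q)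
    (hσ : ∀ a : ℕ, a ∣ m → SigmaCond Q a (σ a)) (A : SL2Z) : ∃ Am, CongrCond Q m A Am := by
  obtain ⟨y, hy, B, hB⟩ := exists_eq_slTwo_mul_heckeMatrix (N := !![1, 0; 0, (m : ℤ)] * A.1) hm hcop
    (by rw [Matrix.det_mul, det_one_zero_zero_natCast, A.2, mul_one])
  have hδ := reduction_sigma_mul_heckeMatrix hy (hσ _ (dvd_of_mem_heckeIndex hy))
  refine ⟨B * (σ y.1)⁻¹, congrCond_iff.mpr ?_⟩
  calc reduction Q (B * (σ y.1)⁻¹).1 * reduction Q !![1, 0; 0, (m : ℤ)]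
      = reduction Q (B.1 * (((σ y.1)⁻¹).1 * (σ y.1).1) * heckeMatrix Q m y) := by
        rw [← hδ, Matrix.SpecialLinearGroup.coe_mul]
        simp only [map_mul, mul_assoc]
    _ = reduction Q !![1, 0; 0, (m : ℤ)] * reduction Q A.1 := by
        rw [slTwo_coe_inv_mul, Matrix.mul_one, ← hB, map_mul]

theorem reduction_sigma_mul_eq (hcop : m.Coprime Q)
    (hσ : ∀ a : ℕ, a ∣ m → SigmaCond Q a (σ a)) {A Am B : SL2Z} (hA : CongrCond Q m A Am)
    {x y : (_ : ℕ) × ℕ} (hx : x ∈ heckeIndex m) (hy : y ∈ heckeIndex m)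
    (h : heckeMatrix Q m x * A.1 = B.1 * heckeMatrix Q m y) :
    reduction Q (σ x.1 * B).1 = reduction Q (Am * σ y.1).1 := by
  refine (isUnit_reduction_of_det_eq hcop (det_heckeMatrix (Q := Q) hy)).mul_right_cancel ?_
  calc reduction Q (σ x.1 * B).1 * reduction Q (heckeMatrix Q m y)
      = reduction Q (σ x.1).1 * reduction Q (heckeMatrix Q m x) * reduction Q A.1 := by
        rw [Matrix.SpecialLinearGroup.coe_mul, ← map_mul, ← map_mul, ← map_mul, Matrix.mul_assoc,
          Matrix.mul_assoc, h]
    _ = reduction Q Am.1 * (reduction Q (σ y.1).1 * reduction Q (heckeMatrix Q m y)) := by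
        rw [reduction_sigma_mul_heckeMatrix hx (hσ _ (dvd_of_mem_heckeIndex hx)),
          reduction_sigma_mul_heckeMatrix hy (hσ _ (dvd_of_mem_heckeIndex hy)),
          congrCond_iff.mp hA]
    _ = reduction Q (Am * σ y.1).1 * reduction Q (heckeMatrix Q m y) := by
        rw [Matrix.SpecialLinearGroup.coe_mul, map_mul, mul_assoc]

end Congruence

/-! ### Bilinear forms and the Jacobi slash operator -/

section Bilinear

variable {ι : Type*} [Fintype ι] {S : Matrix ι ι ℤ}

lemma bilinC_eq_toBilin' (x y : ι → ℂ) :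
    bilinC S x y = Matrix.toBilin' (S.map (Int.cast : ℤ → ℂ)) x y := by
  rw [Matrix.toBilin'_apply]
  rfl

lemma bilinQ_eq_toBilin' (x y : ι → ℚ) :
    bilinQ S x y = Matrix.toBilin' (S.map (Int.cast : ℤ → ℚ)) x y := by
  rw [Matrix.toBilin'_apply]
  rfl

lemma bilinC_add_left (x x' y : ι → ℂ) : bilinC S (x + x') y = bilinC S x y + bilinC S x' y := by
  simp only [bilinC_eq_toBilin', map_add, LinearMap.add_apply]

lemma bilinC_add_right (x y y' : ι → ℂ) : bilinC S x (y + y') = bilinC S x y + bilinC S x y' := by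
  simp only [bilinC_eq_toBilin', map_add]

lemma bilinC_smul_left (c : ℂ) (x y : ι → ℂ) : bilinC S (c • x) y = c * bilinC S x y := by
  simp only [bilinC_eq_toBilin', map_smul, LinearMap.smul_apply, smul_eq_mul]

lemma bilinC_smul_right (c : ℂ) (x y : ι → ℂ) : bilinC S x (c • y) = c * bilinC S x y := by
  simp only [bilinC_eq_toBilin', map_smul, smul_eq_mul]

lemma bilinC_comm (hS : S.IsSymm) (x y : ι → ℂ) : bilinC S x y = bilinC S y x := by
  rw [bilinC, bilinC, Finset.sum_comm]
  refine Finset.sum_congr rfl fun i _ => Finset.sum_congr rfl fun j _ => ?_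
  rw [hS.apply i j]
  ring

lemma bilinQ_smul_left (c : ℚ) (x y : ι → ℚ) : bilinQ S (c • x) y = c * bilinQ S x y := by
  simp only [bilinQ_eq_toBilin', map_smul, LinearMap.smul_apply, smul_eq_mul]

lemma bilinQ_smul_right (c : ℚ) (x y : ι → ℚ) : bilinQ S x (c • y) = c * bilinQ S x y := by
  simp only [bilinQ_eq_toBilin', map_smul, smul_eq_mul]

/-- The inclusion of the lattice `L = ℤ^ι` into `L ⊗ ℂ`. -/
def latticeInclusion : (ι → ℤ) →+ (ι → ℂ) :=
  (Int.castAddHom ℂ).compLeft ι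

lemma bilinC_latticeInclusion (x y : ι → ℤ) :
    bilinC S (latticeInclusion x) (latticeInclusion y) = bilinZ S x y := by
  simp [bilinC, bilinZ, latticeInclusion]

end Bilinear

/-- The slash operator `φ|_{k,t} M` of weight `k` and index `t`. It is normalised so that
`M = (a, b; 0, d)` sends `φ(τ, z)` to `a^k φ(Mτ, a z)`, and multiplies the index by `det M`. -/
def jacobiSlash {ι : Type*} [Fintype ι] (S : Matrix ι ι ℤ) (k : ℤ) (t : ℂ)
    (φ : ℂ → (ι → ℂ) → ℂ) (M : Matrix (Fin 2) (Fin 2) ℤ) (τ : ℂ) (z : ι → ℂ) : ℂ :=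
  (M.det / automorphyFactor M τ) ^ k
    * Complex.exp (-((π : ℂ) * I * t * M.det * M 1 0 * bilinC S z z / automorphyFactor M τ))
    * φ (moebius M τ) ((M.det / automorphyFactor M τ) • z)

section Slash

variable {ι : Type*} [Fintype ι] {S : Matrix ι ι ℤ} {k : ℤ} {φ : ℂ → (ι → ℂ) → ℂ}
  {M N : Matrix (Fin 2) (Fin 2) ℤ} {τ : ℂ}

lemma mul_apply_one_zero_mul_automorphyFactor :
    ((M * N) 1 0 : ℂ) * automorphyFactor N τ
      = N 1 0 * automorphyFactor (M * N) τ + M 1 0 * N.det := by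
  rw [Matrix.det_fin_two]
  simp only [automorphyFactor, Matrix.mul_apply, Fin.sum_univ_two]
  push_cast
  ring

lemma jacobiSlash_mul (t : ℂ) (hM : 0 < M.det) (hN : 0 < N.det) (hτ : 0 < τ.im) (z : ι → ℂ) :
    jacobiSlash S k t φ (M * N) τ z
      = jacobiSlash S k (M.det * t) (jacobiSlash S k t φ M) N τ z := by
  have hJN := automorphyFactor_ne_zero hN.ne' hτ
  have hJM := automorphyFactor_ne_zero hM.ne' (moebius_im_pos hN hτ)
  have hJ := automorphyFactor_mul (M := M) hN.ne' hτ
  have hc := mul_apply_one_zero_mul_automorphyFactor (M := M) (N := N) (τ := τ)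
  have hfactor : ((M * N).det : ℂ) / automorphyFactor (M * N) τ
      = M.det / automorphyFactor M (moebius N τ) * (N.det / automorphyFactor N τ) := by
    rw [Matrix.det_mul, hJ, Int.cast_mul, mul_div_mul_comm]
  rw [jacobiSlash, jacobiSlash, jacobiSlash, hfactor, moebius_mul hN.ne' hτ, smul_smul,
    bilinC_smul_left, bilinC_smul_right, mul_zpow]
  have hexp : -((π : ℂ) * I * t * (M * N).det * (M * N) 1 0 * bilinC S z z
        / automorphyFactor (M * N) τ)
      = -((π : ℂ) * I * (M.det * t) * N.det * N 1 0 * bilinC S z z / automorphyFactor N τ)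
        + -((π : ℂ) * I * t * M.det * M 1 0 * (N.det / automorphyFactor N τ
          * (N.det / automorphyFactor N τ * bilinC S z z))
            / automorphyFactor M (moebius N τ)) := by
    rw [hJ] at hc ⊢
    rw [Matrix.det_mul, Int.cast_mul]
    field_simp
    linear_combination -(t * M.det * N.det * bilinC S z z) * hc
  rw [hexp, Complex.exp_add]
  ring

lemma jacobiSlash_sum {α : Type*} (s : Finset α) (c : α → ℂ) (F : α → ℂ → (ι → ℂ) → ℂ) (t : ℂ)
    (z : ι → ℂ) :
    jacobiSlash S k t (fun τ z => ∑ x ∈ s, c x * F x τ z) M τ z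
      = ∑ x ∈ s, c x * jacobiSlash S k t (F x) M τ z := by
  simp only [jacobiSlash, Finset.mul_sum]
  exact Finset.sum_congr rfl fun x _ => by ring

lemma jacobiSlash_slTwo_eq_iff (t c : ℂ) (A : SL2Z) (hτ : 0 < τ.im) (z : ι → ℂ) :
    jacobiSlash S k t φ A.1 τ z = c * φ τ z ↔
      φ (moebius A.1 τ) (fun i => z i / automorphyFactor A.1 τ)
        = c * automorphyFactor A.1 τ ^ (((k : ℚ) : ℂ))
          * Complex.exp ((π : ℂ) * I * t * (A.1 1 0 : ℂ) * bilinC S z z / automorphyFactor A.1 τ)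
          * φ τ z := by
  have hJ := automorphyFactor_slTwo_ne_zero A hτ
  have harg : (fun i => z i / automorphyFactor A.1 τ) = (1 / automorphyFactor A.1 τ) • z := by
    ext i
    rw [Pi.smul_apply, smul_eq_mul, one_div_mul_eq_div]
  rw [jacobiSlash, A.2, Int.cast_one, mul_one, harg, Rat.cast_intCast, Complex.cpow_intCast,
    one_div, _root_.inv_zpow, Complex.exp_neg, ← mul_inv,
    inv_mul_eq_iff_eq_mul₀ (mul_ne_zero (zpow_ne_zero k hJ) (Complex.exp_ne_zero _))]
  refine Eq.congr rfl ?_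
  ring

end Slash

lemma IsJacobiForm.jacobiSlash_slTwo_mul {ι : Type*} [Fintype ι] {S : Matrix ι ι ℤ} {k : ℤ} {t : ℚ}
    {χ : SL2Z → ℂ} {ν : (ι → ℤ) → (ι → ℤ) → ℂ} {f : ℚ × (ι → ℚ) → ℂ} {φ : ℂ → (ι → ℂ) → ℂ}
    (hφ : IsJacobiForm S (k : ℚ) t χ ν f φ) (B : SL2Z) {N : Matrix (Fin 2) (Fin 2) ℤ}
    (hN : 0 < N.det) {τ : ℂ} (hτ : 0 < τ.im) (z : ι → ℂ) :
    jacobiSlash S k t φ (B.1 * N) τ z = χ B * jacobiSlash S k t φ N τ z := by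
  have hNτ := moebius_im_pos hN hτ
  have hB (u : ι → ℂ) := (jacobiSlash_slTwo_eq_iff _ _ B hNτ u).mpr (hφ.modular B _ hNτ u)
  rw [jacobiSlash_mul _ (B.2.symm ▸ one_pos) hN hτ, B.2, Int.cast_one, one_mul, jacobiSlash, hB,
    jacobiSlash]
  ring

/-! ### The elliptic law and the Heisenberg character -/

lemma add_smul_latticeInclusion_add {ι : Type*} (x y : ι → ℤ) (τ : ℂ) (z : ι → ℂ) :
    z + τ • latticeInclusion x + latticeInclusion y
      = fun i => z i + (x i : ℂ) * τ + (y i : ℂ) := by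
  ext i
  exact congrArg (z i + · + (y i : ℂ)) (mul_comm τ (x i))

/-- The theta factor `exp(-πit((x, x)τ + 2(x, z)))` in the elliptic law of a Jacobi form of
index `t`. -/
def ellipticFactor {ι : Type*} [Fintype ι] (S : Matrix ι ι ℤ) (t : ℂ) (x : ι → ℤ) (τ : ℂ)
    (z : ι → ℂ) : ℂ :=
  Complex.exp (-((π : ℂ) * I * t) * (bilinZ S x x * τ + 2 * bilinC S (latticeInclusion x) z))

section EllipticFactor

variable {ι : Type*} [Fintype ι] {S : Matrix ι ι ℤ} (t : ℂ) (x : ι → ℤ) (τ : ℂ) (z : ι → ℂ)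

lemma ellipticFactor_ne_zero : ellipticFactor S t x τ z ≠ 0 := Complex.exp_ne_zero _

lemma ellipticFactor_add (hS : S.IsSymm) (x' y' : ι → ℤ) :
    ellipticFactor S t (x + x') τ z * Complex.exp (-(2 * π * I * t * bilinZ S x y'))
      = ellipticFactor S t x τ (z + τ • latticeInclusion x' + latticeInclusion y')
        * ellipticFactor S t x' τ z := by
  simp only [ellipticFactor, ← Complex.exp_add, ← bilinC_latticeInclusion, map_add,
    bilinC_add_left, bilinC_add_right, bilinC_smul_right]
  rw [bilinC_comm hS (latticeInclusion x') (latticeInclusion x)]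
  congr 1
  ring

lemma ellipticFactor_neg : ellipticFactor S t (-x) τ (-z) = ellipticFactor S t x τ z := by
  simp [ellipticFactor, bilinZ, bilinC, latticeInclusion]

lemma ellipticFactor_add_one :
    ellipticFactor S t x (τ + 1) z
      = ellipticFactor S t x τ z * Complex.exp (-(π * I * t * bilinZ S x x)) := by
  rw [ellipticFactor, ellipticFactor, ← Complex.exp_add]
  congr 1
  ring

lemma ellipticFactor_scale {a b d : ℕ} (hd : 0 < d) (Q : ℕ) :
    ellipticFactor S t ((d : ℤ) • x) ((a * τ + b * Q) / d) ((a : ℂ) • z)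
      = ellipticFactor S ((a * d : ℕ) * t) x τ z
        * Complex.exp (-(π * I * t * bilinZ S x x)) ^ (d * b * Q) := by
  have hd0 : (d : ℂ) ≠ 0 := by exact_mod_cast hd.ne'
  have hx : latticeInclusion ((d : ℤ) • x) = (d : ℂ) • latticeInclusion x := by
    ext i
    simp [latticeInclusion]
  rw [ellipticFactor, ellipticFactor, ← Complex.exp_nat_mul, ← Complex.exp_add]
  simp only [← bilinC_latticeInclusion, hx, bilinC_smul_left, bilinC_smul_right]
  congr 1
  push_cast
  field_simp
  ring

end EllipticFactor

namespace IsJacobiForm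

variable {ι : Type*} [Fintype ι] {S : Matrix ι ι ℤ} {k : ℤ} {t : ℚ} {χ : SL2Z → ℂ}
  {ν : (ι → ℤ) → (ι → ℤ) → ℂ} {f : ℚ × (ι → ℚ) → ℂ} {φ : ℂ → (ι → ℂ) → ℂ}

section Heisenberg

lemma apply_add_lattice (hφ : IsJacobiForm S (k : ℚ) t χ ν f φ) (x y : ι → ℤ) {τ : ℂ}
    (hτ : 0 < τ.im) (z : ι → ℂ) :
    φ τ (z + τ • latticeInclusion x + latticeInclusion y)
      = ν x y * ellipticFactor S t x τ z * φ τ z := by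
  rw [add_smul_latticeInclusion_add]
  exact hφ.elliptic x y τ hτ z

lemma apply_add_one (hφ : IsJacobiForm S (k : ℚ) t χ ν f φ) {τ : ℂ} (hτ : 0 < τ.im) (z : ι → ℂ) :
    φ (τ + 1) z = χ ModularGroup.T * φ τ z := by
  simpa [ModularGroup.coe_T] using hφ.modular ModularGroup.T τ hτ z

lemma apply_neg (hφ : IsJacobiForm S (k : ℚ) t χ ν f φ) {τ : ℂ} (hτ : 0 < τ.im) (z : ι → ℂ) :
    φ τ (-z) = χ (-1) * (-1) ^ k * φ τ z := by
  simpa [div_neg, Pi.neg_def] using hφ.modular (-1) τ hτ z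

variable {τ : ℂ} {z : ι → ℂ}

lemma heisenberg_zero (hφ : IsJacobiForm S (k : ℚ) t χ ν f φ) (hτ : 0 < τ.im) (hz : φ τ z ≠ 0) :
    ν 0 0 = 1 := by
  have h := hφ.apply_add_lattice 0 0 hτ z
  rw [map_zero, smul_zero, add_zero, add_zero] at h
  simpa [ellipticFactor, bilinZ, bilinC, hz] using h

/-- Both sides compare the translate of `φ` by `(x + x')τ + (y + y')` with `φ`, on the right in two
steps. -/
lemma heisenberg_add_eq (hφ : IsJacobiForm S (k : ℚ) t χ ν f φ) (hS : S.IsSymm) (hτ : 0 < τ.im)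
    (hz : φ τ z ≠ 0) (x y x' y' : ι → ℤ) :
    ν (x + x') (y + y') = ν x y * ν x' y' * Complex.exp (-(2 * π * I * t * bilinZ S x y')) := by
  have hsum := hφ.apply_add_lattice (x + x') (y + y') hτ z
  have htwo := hφ.apply_add_lattice x y hτ (z + τ • latticeInclusion x' + latticeInclusion y')
  rw [hφ.apply_add_lattice x' y' hτ] at htwo
  have harg : z + τ • latticeInclusion (x + x') + latticeInclusion (y + y')
      = z + τ • latticeInclusion x' + latticeInclusion y' + τ • latticeInclusion x
        + latticeInclusion y := by
    rw [map_add, map_add, smul_add]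
    abel
  rw [harg, htwo] at hsum
  apply mul_right_cancel₀ (mul_ne_zero (ellipticFactor_ne_zero (S := S) t (x + x') τ z) hz)
  linear_combination -hsum - ν x y * ν x' y' * φ τ z * ellipticFactor_add t x τ z hS x' y'

lemma heisenberg_ne_zero (hφ : IsJacobiForm S (k : ℚ) t χ ν f φ) (hS : S.IsSymm)
    (hτ : 0 < τ.im) (hz : φ τ z ≠ 0) (x y : ι → ℤ) : ν x y ≠ 0 := by
  have h := hφ.heisenberg_add_eq hS hτ hz x y (-x) (-y)
  rw [add_neg_cancel, add_neg_cancel, hφ.heisenberg_zero hτ hz, mul_assoc] at h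
  exact left_ne_zero_of_mul (h ▸ one_ne_zero)

/-- Compare the two factorisations `(x, y) = (x, 0) + (0, y) = (0, y) + (x, 0)`. -/
lemma exp_two_mul_index_eq_one (hφ : IsJacobiForm S (k : ℚ) t χ ν f φ) (hS : S.IsSymm)
    (hτ : 0 < τ.im) (hz : φ τ z ≠ 0) (x y : ι → ℤ) :
    Complex.exp (-(2 * π * I * t * bilinZ S x y)) = 1 := by
  have hxy := hφ.heisenberg_add_eq hS hτ hz x 0 0 y
  have hyx := hφ.heisenberg_add_eq hS hτ hz 0 y x 0
  have hzero : bilinZ S (0 : ι → ℤ) 0 = 0 := by simp [bilinZ]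
  rw [hzero, Int.cast_zero, mul_zero, neg_zero, Complex.exp_zero, mul_one] at hyx
  rw [add_zero, zero_add] at hxy hyx
  rw [hyx, mul_comm (ν x 0)] at hxy
  exact (mul_eq_left₀ (mul_ne_zero (hφ.heisenberg_ne_zero hS hτ hz 0 y)
    (hφ.heisenberg_ne_zero hS hτ hz x 0))).mp hxy.symm

lemma heisenberg_add (hφ : IsJacobiForm S (k : ℚ) t χ ν f φ) (hS : S.IsSymm)
    (hτ : 0 < τ.im) (hz : φ τ z ≠ 0) (x y x' y' : ι → ℤ) :
    ν (x + x') (y + y') = ν x y * ν x' y' := by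
  rw [hφ.heisenberg_add_eq hS hτ hz, hφ.exp_two_mul_index_eq_one hS hτ hz, mul_one]

lemma heisenberg_neg (hφ : IsJacobiForm S (k : ℚ) t χ ν f φ) (hχ : χ (-1) ≠ 0)
    (hτ : 0 < τ.im) (hz : φ τ z ≠ 0) (x y : ι → ℤ) : ν (-x) (-y) = ν x y := by
  have hpos := hφ.apply_add_lattice x y hτ z
  have hneg := hφ.apply_add_lattice (-x) (-y) hτ (-z)
  have harg : -z + τ • latticeInclusion (-x) + latticeInclusion (-y)
      = -(z + τ • latticeInclusion x + latticeInclusion y) := by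
    rw [map_neg, map_neg, smul_neg]
    abel
  rw [harg, hφ.apply_neg hτ, hφ.apply_neg hτ, hpos, ellipticFactor_neg] at hneg
  have hsign : χ (-1) * (-1 : ℂ) ^ k ≠ 0 :=
    mul_ne_zero hχ (zpow_ne_zero k (neg_ne_zero.mpr one_ne_zero))
  apply mul_right_cancel₀
    (mul_ne_zero (mul_ne_zero hsign (ellipticFactor_ne_zero (S := S) t x τ z)) hz)
  linear_combination -hneg

lemma heisenberg_add_self (hφ : IsJacobiForm S (k : ℚ) t χ ν f φ) (hS : S.IsSymm)
    (hχ : χ (-1) ≠ 0) (hτ : 0 < τ.im) (hz : φ τ z ≠ 0) (x y : ι → ℤ) :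
    ν (x + x) (y + y) = 1 := by
  calc ν (x + x) (y + y) = ν x y * ν (-x) (-y) := by
        rw [hφ.heisenberg_add hS hτ hz, hφ.heisenberg_neg hχ hτ hz]
    _ = 1 := by
        rw [← hφ.heisenberg_add hS hτ hz, add_neg_cancel, add_neg_cancel, hφ.heisenberg_zero hτ hz]

/-- By invariance under `T`, the translates by `x(τ + 1)` at `τ + 1` and by `xτ + x` at `τ` carry
the same factor. -/
lemma exp_index_eq_one (hφ : IsJacobiForm S (k : ℚ) t χ ν f φ) (hχ : χ ModularGroup.T ≠ 0)
    (hν : ∀ x y, ν x y = 1) (hτ : 0 < τ.im) (hz : φ τ z ≠ 0) (x : ι → ℤ) :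
    Complex.exp (-(π * I * t * bilinZ S x x)) = 1 := by
  have hτ1 : 0 < (τ + 1).im := by simpa using hτ
  have h := hφ.apply_add_lattice x 0 hτ1 z
  have hT := hφ.apply_add_lattice x x hτ z
  rw [map_zero, add_zero, add_smul, one_smul, ← add_assoc, hφ.apply_add_one hτ,
    hφ.apply_add_one hτ, hT, ellipticFactor_add_one, hν, hν] at h
  apply mul_left_cancel₀
    (mul_ne_zero (mul_ne_zero (ellipticFactor_ne_zero (S := S) t x τ z) hχ) hz)
  linear_combination -h

theorem heisenberg_scale (hφ : IsJacobiForm S (k : ℚ) t χ ν f φ) (hS : S.IsSymm)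
    (hχ : ∀ A, χ A ≠ 0) {Q : ℕ} (hν : Odd Q → ∀ x y, ν x y = 1) (hτ : 0 < τ.im)
    (hz : φ τ z ≠ 0) {a d : ℕ} (ha : a.Coprime Q) (hd : d.Coprime Q) (b : ℕ) (x y : ι → ℤ) :
    ν ((d : ℤ) • x) ((a : ℤ) • y - ((b * Q : ℕ) : ℤ) • x)
        * Complex.exp (-(π * I * t * bilinZ S x x)) ^ (d * b * Q) = ν x y := by
  rcases Nat.even_or_odd Q with hQ | hQ
  · have hodd {n : ℕ} (hn : n.Coprime Q) : Odd n :=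
      Nat.coprime_two_left.mp (hn.coprime_dvd_right hQ.two_dvd).symm
    obtain ⟨q, rfl⟩ := hQ
    obtain ⟨a', rfl⟩ := hodd ha
    obtain ⟨d', rfl⟩ := hodd hd
    have hsq : Complex.exp (-(π * I * t * bilinZ S x x)) ^ 2 = 1 := by
      rw [← Complex.exp_nat_mul, ← hφ.exp_two_mul_index_eq_one hS hτ hz x x]
      congr 1
      push_cast
      ring
    have hexp : Complex.exp (-(π * I * t * bilinZ S x x)) ^ ((2 * d' + 1) * b * (q + q)) = 1 := by
      rw [← two_mul, mul_left_comm, pow_mul, hsq, one_pow]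
    let u : ι → ℤ := (d' : ℤ) • x
    let v : ι → ℤ := (a' : ℤ) • y - ((b * q : ℕ) : ℤ) • x
    have hx : ((2 * d' + 1 : ℕ) : ℤ) • x = x + (u + u) := by
      push_cast
      module
    have hy : ((2 * a' + 1 : ℕ) : ℤ) • y - ((b * (q + q) : ℕ) : ℤ) • x = y + (v + v) := by
      push_cast
      module
    rw [hexp, mul_one, hx, hy, hφ.heisenberg_add hS hτ hz,
      hφ.heisenberg_add_self hS (hχ _) hτ hz, mul_one]
  · rw [hν hQ, hν hQ, hφ.exp_index_eq_one (hχ _) (hν hQ) hτ hz, one_pow, mul_one]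

end Heisenberg

end IsJacobiForm

/-! ### The Hecke operator on Jacobi forms -/

section HeckeSum

variable {ι : Type*} [Fintype ι] {S : Matrix ι ι ℤ} {k : ℤ} {φ : ℂ → (ι → ℂ) → ℂ} {Q m : ℕ}
  {c : (_ : ℕ) × ℕ} {τ : ℂ}

lemma moebius_heckeMatrix (Q m : ℕ) (c : (_ : ℕ) × ℕ) (τ : ℂ) :
    moebius (heckeMatrix Q m c) τ = (c.1 * τ + c.2 * Q) / (m / c.1 : ℕ) := by
  simp [moebius, automorphyFactor, heckeMatrix, -Int.natCast_ediv, -Nat.cast_div_charZero]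

lemma moebius_heckeMatrix_im_pos (hc : c ∈ heckeIndex m) (hτ : 0 < τ.im) :
    0 < (moebius (heckeMatrix Q m c) τ).im := by
  refine moebius_im_pos ?_ hτ
  rw [det_heckeMatrix hc]
  exact_mod_cast Nat.pos_of_ne_zero (mem_heckeIndex.mp hc).1.2

lemma heckeSum_eq_sum (χ : SL2Z → ℂ) (σ : ℕ → SL2Z) (z : ι → ℂ) :
    heckeSum φ χ σ k Q m τ z = ∑ c ∈ heckeIndex m,
      χ (σ c.1) * ((c.1 : ℂ) ^ k * φ (moebius (heckeMatrix Q m c) τ) ((c.1 : ℂ) • z)) := by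
  rw [heckeIndex, Finset.sum_sigma]
  refine Finset.sum_congr rfl fun a _ => Finset.sum_congr rfl fun b _ => ?_
  rw [moebius_heckeMatrix, mul_comm _ (χ _), mul_assoc]
  rfl

lemma jacobiSlash_heckeMatrix (t : ℂ) (hc : c ∈ heckeIndex m) (z : ι → ℂ) :
    jacobiSlash S k t φ (heckeMatrix Q m c) τ z
      = (c.1 : ℂ) ^ k * φ (moebius (heckeMatrix Q m c) τ) ((c.1 : ℂ) • z) := by
  have hd : ((m / c.1 : ℕ) : ℂ) ≠ 0 := by exact_mod_cast (div_pos_of_mem_heckeIndex hc).ne'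
  have hfactor : ((heckeMatrix Q m c).det : ℂ) / automorphyFactor (heckeMatrix Q m c) τ = c.1 := by
    simp [heckeMatrix, automorphyFactor, hd, -Int.natCast_ediv]
  have h10 : heckeMatrix Q m c 1 0 = 0 := rfl
  rw [jacobiSlash, hfactor, h10]
  simp

namespace IsJacobiForm

variable {t : ℚ} {ν : (ι → ℤ) → (ι → ℤ) → ℂ} {f : ℚ × (ι → ℚ) → ℂ} {σ : ℕ → SL2Z}

lemma differentiableOn_heckeSum {χ : SL2Z → ℂ} (hφ : IsJacobiForm S (k : ℚ) t χ ν f φ) :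
    DifferentiableOn ℂ (fun p : ℂ × (ι → ℂ) => heckeSum φ χ σ k Q m p.1 p.2)
      {p | 0 < p.1.im} := by
  simp only [heckeSum_eq_sum]
  refine DifferentiableOn.fun_sum fun c hc => ((hφ.holo.comp (t := {p | 0 < p.1.im})
    (f := fun p : ℂ × (ι → ℂ) => (moebius (heckeMatrix Q m c) p.1, (c.1 : ℂ) • p.2)) ?_
    fun p hp => moebius_heckeMatrix_im_pos hc hp).const_mul _).const_mul _
  simp only [moebius_heckeMatrix]
  fun_prop

theorem jacobiSlash_heckeSum {χ : SL2Z →* ℂ} (hφ : IsJacobiForm S (k : ℚ) t χ ν f φ)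
    (hχ : CongruenceSubgroup.Gamma Q ≤ χ.ker) (hm : 0 < m) (hcop : m.Coprime Q)
    (hσ : ∀ a : ℕ, a ∣ m → SigmaCond Q a (σ a)) {A Am : SL2Z} (hA : CongrCond Q m A Am)
    (hτ : 0 < τ.im) (z : ι → ℂ) :
    jacobiSlash S k (m * t) (heckeSum φ χ σ k Q m) A.1 τ z
      = χ Am * heckeSum φ χ σ k Q m τ z := by
  have hdet (c : heckeIndex m) : 0 < (heckeMatrix Q m c).det := by
    rw [det_heckeMatrix c.2]
    exact_mod_cast hm
  have hsum : heckeSum φ χ σ k Q m = fun τ z =>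
      ∑ c : heckeIndex m, χ (σ c.1.1) * jacobiSlash S k t φ (heckeMatrix Q m c) τ z := by
    ext τ z
    rw [heckeSum_eq_sum, ← Finset.sum_coe_sort]
    exact Finset.sum_congr rfl fun c _ => by rw [jacobiSlash_heckeMatrix _ c.2]
  obtain ⟨e, he⟩ := exists_perm_heckeMatrix_mul hm hcop A
  have hterm (c : heckeIndex m) :
      χ (σ c.1.1) * jacobiSlash S k (m * t) (jacobiSlash S k t φ (heckeMatrix Q m c)) A.1 τ z
        = χ Am * (χ (σ (e c).1.1) * jacobiSlash S k t φ (heckeMatrix Q m (e c)) τ z) := by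
    obtain ⟨B, hB⟩ := he c
    have hχB : χ (σ c.1.1) * χ B = χ Am * χ (σ (e c).1.1) := by
      rw [← map_mul, ← map_mul]
      exact map_eq_of_reduction_eq hχ (reduction_sigma_mul_eq hcop hσ hA c.2 (e c).2 hB)
    have hmul := jacobiSlash_mul (S := S) (k := k) (φ := φ) t (hdet c) (A.2.symm ▸ one_pos) hτ z
    rw [det_heckeMatrix c.2, hB, hφ.jacobiSlash_slTwo_mul B (hdet (e c)) hτ,
      Int.cast_natCast] at hmul
    rw [← hmul, ← mul_assoc, hχB, mul_assoc]
  rw [hsum, jacobiSlash_sum]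
  simp only [hterm]
  rw [Equiv.sum_comp e fun c : heckeIndex m =>
    χ Am * (χ (σ c.1.1) * jacobiSlash S k t φ (heckeMatrix Q m c) τ z), Finset.mul_sum]

lemma apply_heckeMatrix_add_lattice {χ : SL2Z → ℂ} (hφ : IsJacobiForm S (k : ℚ) t χ ν f φ)
    (hS : S.IsSymm) (hχ : ∀ A, χ A ≠ 0) (hν : Odd Q → ∀ x y, ν x y = 1) (hcop : m.Coprime Q)
    (hc : c ∈ heckeIndex m) (x y : ι → ℤ) (hτ : 0 < τ.im) (z : ι → ℂ) :
    φ (moebius (heckeMatrix Q m c) τ)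
        ((c.1 : ℂ) • (z + τ • latticeInclusion x + latticeInclusion y))
      = ν x y * ellipticFactor S (m * t) x τ z
        * φ (moebius (heckeMatrix Q m c) τ) ((c.1 : ℂ) • z) := by
  obtain ⟨a, b⟩ := c
  obtain ⟨d, rfl⟩ := dvd_of_mem_heckeIndex hc
  have hw := moebius_heckeMatrix_im_pos (Q := Q) hc hτ
  have hd := div_pos_of_mem_heckeIndex hc
  rw [moebius_heckeMatrix] at hw ⊢
  simp only [Nat.mul_div_cancel_left d (fst_pos_of_mem_heckeIndex hc)] at hw hd ⊢
  have hd0 : (d : ℂ) ≠ 0 := by exact_mod_cast hd.ne'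
  set w : ℂ := (a * τ + b * Q) / d
  have hwd : w * d = a * τ + b * Q := div_mul_cancel₀ _ hd0
  have harg : (a : ℂ) • (z + τ • latticeInclusion x + latticeInclusion y)
      = (a : ℂ) • z + w • latticeInclusion ((d : ℤ) • x)
        + latticeInclusion ((a : ℤ) • y - ((b * Q : ℕ) : ℤ) • x) := by
    ext i
    simp only [latticeInclusion, map_sub, AddMonoidHom.compLeft_apply, Int.coe_castAddHom,
      Function.comp_apply, Pi.add_apply, Pi.sub_apply, Pi.smul_apply, smul_eq_mul, Int.cast_mul,
      Int.cast_natCast, Nat.cast_mul]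
    linear_combination -(x i : ℂ) * hwd
  rw [harg, hφ.apply_add_lattice _ _ hw]
  by_cases hz : φ w ((a : ℂ) • z) = 0
  · rw [hz, mul_zero, mul_zero]
  · rw [ellipticFactor_scale _ _ _ _ hd, ← hφ.heisenberg_scale hS hχ hν hw hz
      hcop.coprime_mul_right hcop.coprime_mul_left b x y]
    ring

theorem heckeSum_add_lattice {χ : SL2Z → ℂ} (hφ : IsJacobiForm S (k : ℚ) t χ ν f φ)
    (hS : S.IsSymm) (hχ : ∀ A, χ A ≠ 0) (hν : Odd Q → ∀ x y, ν x y = 1) (hcop : m.Coprime Q)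
    (x y : ι → ℤ) (hτ : 0 < τ.im) (z : ι → ℂ) :
    heckeSum φ χ σ k Q m τ (z + τ • latticeInclusion x + latticeInclusion y)
      = ν x y * ellipticFactor S (m * t) x τ z * heckeSum φ χ σ k Q m τ z := by
  rw [heckeSum_eq_sum, heckeSum_eq_sum, Finset.mul_sum]
  refine Finset.sum_congr rfl fun c hc => ?_
  rw [hφ.apply_heckeMatrix_add_lattice hS hχ hν hcop hc x y hτ z]
  ring

end IsJacobiForm

end HeckeSum

section Fourier

variable {ι : Type*} {f : ℚ × (ι → ℚ) → ℂ}

/-- The Fourier coefficients, in terms of those of `φ`, of the summand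
`φ((aτ + bQ) / d, a z)` of the Hecke operator. -/
def heckeTermCoeff (f : ℚ × (ι → ℚ) → ℂ) (Q m : ℕ) (c : (_ : ℕ) × ℕ) (p : ℚ × (ι → ℚ)) : ℂ :=
  f (((m / c.1 : ℕ) / c.1 : ℚ) * p.1, (c.1 : ℚ)⁻¹ • p.2)
    * Complex.exp (2 * (π : ℂ) * I * (p.1 * (c.2 * Q / c.1)))

/-- The Fourier coefficients, in terms of those of `φ`, of the image of `φ` under the Hecke
operator. -/
def heckeCoeff (f : ℚ × (ι → ℚ) → ℂ) (χ : SL2Z → ℂ) (σ : ℕ → SL2Z) (k : ℤ) (Q m : ℕ)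
    (p : ℚ × (ι → ℚ)) : ℂ :=
  ∑ c ∈ heckeIndex m, χ (σ c.1) * ((c.1 : ℂ) ^ k * heckeTermCoeff f Q m c p)

variable [Fintype ι] {S : Matrix ι ι ℤ} {k : ℤ} {t : ℚ} {χ : SL2Z → ℂ}
  {ν : (ι → ℤ) → (ι → ℤ) → ℂ} {φ : ℂ → (ι → ℂ) → ℂ} {Q m : ℕ} {c : (_ : ℕ) × ℕ}
  {σ : ℕ → SL2Z} {p : ℚ × (ι → ℚ)}

namespace IsJacobiForm

lemma support_heckeTermCoeff (hφ : IsJacobiForm S (k : ℚ) t χ ν f φ) (hc : c ∈ heckeIndex m)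
    (hp : heckeTermCoeff f Q m c p ≠ 0) :
    0 ≤ p.1 ∧ InHalfDual S p.2 ∧ 0 ≤ 2 * p.1 * ((m : ℚ) * t) - bilinQ S p.2 p.2 := by
  obtain ⟨a, b⟩ := c
  obtain ⟨d, rfl⟩ := dvd_of_mem_heckeIndex hc
  obtain ⟨n, l⟩ := p
  have ha : (0 : ℚ) < a := by exact_mod_cast fst_pos_of_mem_heckeIndex hc
  have hd := div_pos_of_mem_heckeIndex hc
  have hsupp := hφ.support _ (left_ne_zero_of_mul hp)
  simp only [Nat.mul_div_cancel_left d (fst_pos_of_mem_heckeIndex hc)] at hd hsupp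
  have hd : (0 : ℚ) < d := by exact_mod_cast hd
  obtain ⟨hn, hl, hnorm⟩ := hsupp
  refine ⟨nonneg_of_mul_nonneg_right hn (div_pos hd ha), fun x => ?_, ?_⟩
  · obtain ⟨r, hr⟩ := hl x
    rw [bilinQ_smul_left] at hr
    refine ⟨a * r, ?_⟩
    push_cast
    rw [← hr]
    field_simp
  · rw [bilinQ_smul_left, bilinQ_smul_right] at hnorm
    have hscale : 2 * n * (((a * d : ℕ) : ℚ) * t) - bilinQ S l l
        = (a : ℚ) ^ 2 * (2 * (d / a * n) * t - (a : ℚ)⁻¹ * ((a : ℚ)⁻¹ * bilinQ S l l)) := by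
      push_cast
      field_simp
    rw [hscale]
    positivity

theorem support_heckeCoeff (hφ : IsJacobiForm S (k : ℚ) t χ ν f φ)
    (hp : heckeCoeff f χ σ k Q m p ≠ 0) :
    0 ≤ p.1 ∧ InHalfDual S p.2 ∧ 0 ≤ 2 * p.1 * ((m : ℚ) * t) - bilinQ S p.2 p.2 := by
  obtain ⟨c, hc, hne⟩ := Finset.exists_ne_zero_of_sum_ne_zero hp
  exact hφ.support_heckeTermCoeff hc (right_ne_zero_of_mul (right_ne_zero_of_mul hne))

lemma hasSum_heckeTermCoeff (hφ : IsJacobiForm S (k : ℚ) t χ ν f φ) (hc : c ∈ heckeIndex m)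
    {τ : ℂ} (hτ : 0 < τ.im) (z : ι → ℂ) :
    HasSum (fun p : ℚ × (ι → ℚ) => heckeTermCoeff f Q m c p * Complex.exp (2 * (π : ℂ) * I *
        ((p.1 : ℂ) * τ + bilinC S (fun i => (p.2 i : ℂ)) z)))
      (φ (moebius (heckeMatrix Q m c) τ) ((c.1 : ℂ) • z)) := by
  have ha : (c.1 : ℚ) ≠ 0 := by exact_mod_cast (fst_pos_of_mem_heckeIndex hc).ne'
  have hd : ((m / c.1 : ℕ) : ℚ) ≠ 0 := by exact_mod_cast (div_pos_of_mem_heckeIndex hc).ne'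
  have ha' : (c.1 : ℂ) ≠ 0 := by exact_mod_cast ha
  have hd' : ((m / c.1 : ℕ) : ℂ) ≠ 0 := by exact_mod_cast hd
  let e : ℚ × (ι → ℚ) ≃ ℚ × (ι → ℚ) :=
    (Equiv.smulRight (div_ne_zero hd ha)).prodCongr (Equiv.smulRight (inv_ne_zero ha))
  have h := e.hasSum_iff.mpr
    (hφ.expansion _ (moebius_heckeMatrix_im_pos (Q := Q) hc hτ) ((c.1 : ℂ) • z))
  have hterm (p : ℚ × (ι → ℚ)) :
      (((e p).1 : ℚ) : ℂ) * moebius (heckeMatrix Q m c) τ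
          + bilinC S (fun i => ((e p).2 i : ℂ)) ((c.1 : ℂ) • z)
        = p.1 * (c.2 * Q / c.1) + (p.1 * τ + bilinC S (fun i => (p.2 i : ℂ)) z) := by
    have hsmul : (fun i => ((e p).2 i : ℂ)) = (c.1 : ℂ)⁻¹ • fun i => (p.2 i : ℂ) := by
      ext i
      simp [e]
    have hfst : (e p).1 = ((m / c.1 : ℕ) : ℚ) / c.1 * p.1 := rfl
    rw [hsmul, hfst, bilinC_smul_left, bilinC_smul_right, moebius_heckeMatrix, Rat.cast_mul,
      Rat.cast_div, Rat.cast_natCast, Rat.cast_natCast]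
    field_simp
    ring
  refine h.congr_fun fun p => ?_
  rw [Function.comp_apply, hterm, heckeTermCoeff, mul_assoc, ← Complex.exp_add, ← mul_add]
  rfl

theorem hasSum_heckeCoeff (hφ : IsJacobiForm S (k : ℚ) t χ ν f φ) {τ : ℂ} (hτ : 0 < τ.im)
    (z : ι → ℂ) :
    HasSum (fun p : ℚ × (ι → ℚ) => heckeCoeff f χ σ k Q m p * Complex.exp (2 * (π : ℂ) * I *
        ((p.1 : ℂ) * τ + bilinC S (fun i => (p.2 i : ℂ)) z)))
      (heckeSum φ χ σ k Q m τ z) := by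
  simp only [heckeSum_eq_sum, heckeCoeff, Finset.sum_mul]
  refine hasSum_sum fun c hc => ?_
  simpa only [mul_assoc] using
    ((hφ.hasSum_heckeTermCoeff hc hτ z).mul_left ((c.1 : ℂ) ^ k)).mul_left (χ (σ c.1))

end IsJacobiForm

end Fourier

theorem statement7_general {ι : Type*} [Fintype ι] (S : Matrix ι ι ℤ) (hS : S.IsSymm)
    (k : ℤ) (t : ℚ) (Q : ℕ) (χ : SL2Z →* ℂ) (hχ : CongruenceSubgroup.Gamma Q ≤ χ.ker)
    (ν : (ι → ℤ) → (ι → ℤ) → ℂ) (hνtriv : Odd Q → ∀ x y, ν x y = 1)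
    (f : ℚ × (ι → ℚ) → ℂ) (φ : ℂ → (ι → ℂ) → ℂ)
    (hφ : IsJacobiForm S (k : ℚ) t χ ν f φ)
    (m : ℕ) (hm : 1 ≤ m) (hcop : Nat.Coprime m Q)
    (σ : ℕ → SL2Z) (hσ : ∀ a : ℕ, a ∣ m → SigmaCond Q a (σ a))
    (χm : SL2Z → ℂ) (hχm : ∀ A Am : SL2Z, CongrCond Q m A Am → χm A = χ Am) :
    (∃ g : ℚ × (ι → ℚ) → ℂ,
      IsJacobiForm S (k : ℚ) ((m : ℚ) * t) χm ν g
        (fun τ z => heckeSum φ χ σ k Q m τ z)) ∧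
    (∀ m' : ℕ, (m' : ℤ) ≡ (m : ℤ) [ZMOD (Q : ℤ)] →
      ∀ A Am Am' : SL2Z, CongrCond Q m A Am → CongrCond Q m' A Am' → χ Am = χ Am') := by
  have hχ0 (A : SL2Z) : χ A ≠ 0 := ((Group.isUnit A).map χ).ne_zero
  have hmt : (((m : ℚ) * t : ℚ) : ℂ) = m * t := by push_cast; rfl
  refine ⟨⟨heckeCoeff f χ σ k Q m, ?_⟩, fun m' hm' A Am Am' h h' =>
    map_eq_of_reduction_eq hχ (reduction_eq_of_congrCond hcop hm' h h')⟩
  constructor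
  case holo => exact hφ.differentiableOn_heckeSum
  case modular =>
    intro A τ hτ z
    obtain ⟨Am, hAm⟩ := exists_congrCond hm hcop hσ A
    rw [hχm A Am hAm, hmt]
    exact (jacobiSlash_slTwo_eq_iff _ _ A hτ z).mp (hφ.jacobiSlash_heckeSum hχ hm hcop hσ hAm hτ z)
  case elliptic =>
    intro x y τ hτ z
    rw [← add_smul_latticeInclusion_add, hmt]
    exact hφ.heckeSum_add_lattice hS hχ0 hνtriv hcop x y hτ z
  case support => exact fun p hp => hφ.support_heckeCoeff hp
  case expansion => exact fun τ hτ z => hφ.hasSum_heckeCoeff hτ z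

/-- The Hecke operator `T_-^{(Q)}(m)` maps `J_{k,L;t}(v_η^D × ν)` to
`J_{k,L;mt}(v_{η,m}^D × ν)` for `m` coprime to `Q = 24/D` (with `ν` trivial when `Q` is odd),
and the new character `v_{η,m}^D` depends only on `m mod Q`. -/
theorem statement7 {ι : Type*} [Fintype ι] (S : Matrix ι ι ℤ) (hS : IsEvenPosDef S)
    (k : ℤ) (t : ℚ) (ht : 0 < t)
    (D : ℕ) (hD2 : Even D) (hD24 : D ∣ 24) (hDpos : 0 < D)
    (Q : ℕ) (hQ : Q = 24 / D)
    (vη : SL2Z → ℂ)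
    (hvη : ∀ A : SL2Z, ∀ τ : ℂ, 0 < τ.im →
      dedekindEta (((A.1 0 0 : ℂ) * τ + (A.1 0 1 : ℂ))
            / ((A.1 1 0 : ℂ) * τ + (A.1 1 1 : ℂ))) ^ D
        = vη A * ((A.1 1 0 : ℂ) * τ + (A.1 1 1 : ℂ)) ^ (D / 2) * dedekindEta τ ^ D)
    (ν : (ι → ℤ) → (ι → ℤ) → ℂ) (hν : ∀ x y, HasFiniteOrder (ν x y))
    (hνtriv : Odd Q → ∀ x y, ν x y = 1)
    (f : ℚ × (ι → ℚ) → ℂ) (φ : ℂ → (ι → ℂ) → ℂ)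
    (hφ : IsJacobiForm S (k : ℚ) t vη ν f φ)
    (m : ℕ) (hm : 1 ≤ m) (hcop : Nat.Coprime m Q)
    (σ : ℕ → SL2Z) (hσ : ∀ a : ℕ, a ∣ m → SigmaCond Q a (σ a))
    (vηm : SL2Z → ℂ)
    (hvηm : ∀ A Am : SL2Z, CongrCond Q m A Am → vηm A = vη Am) :
    (∃ g : ℚ × (ι → ℚ) → ℂ,
      IsJacobiForm S (k : ℚ) ((m : ℚ) * t) vηm ν g
        (fun τ z => heckeSum φ vη σ k Q m τ z)) ∧
    (∀ m' : ℕ, 1 ≤ m' → Nat.Coprime m' Q → (m' : ℤ) ≡ (m : ℤ) [ZMOD (Q : ℤ)] →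
      ∀ A Am Am' : SL2Z, CongrCond Q m A Am → CongrCond Q m' A Am' → vη Am = vη Am') := by
  have hDQ : D * Q = 24 := hQ ▸ Nat.mul_div_cancel' hD24
  obtain ⟨hψ, hχ⟩ := statement7_general S hS.symm k t Q (etaCharacter hvη)
    (Gamma_le_ker_etaCharacter hDQ hvη) ν hνtriv f φ hφ m hm hcop σ hσ vηm hvηm
  exact ⟨hψ, fun m' _ _ hm' => hχ m' hm'⟩
end
end

section
/- Let L be an even positive definite lattice of rank n, k ∈ ℤ, t ∈ ℚ with t > 0, D an even divisor of 24, Q = 24/D, and let φ ∈ J_{k,L;t}(v_η^D × ν) be a holomorphic Jacobi form (ν trivial if Q is odd). Fix μ ∈ (ℤ/Qℤ)^*, and for each a ≥ 1 coprime to Q fix σ_a ∈ SL₂(ℤ) with σ_a ≡ (a^{−1},0;0,a) mod Q. Then the series Σ_{m ≥ 1, m ≡ μ mod Q} m^{−1} Σ_{ad=m, a>0} Σ_{b mod d} a^k · v_η^D(σ_a) · φ((aτ+bQ)/d, a𝔷) · exp(2πi(m/Q)ω) converges absolutely and locally uniformly on the tube domain H(L(Qt)) := {(τ,𝔷,ω)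 ∈ ℍ × ℂⁿ × ℍ : 2 Im(τ)Im(ω) − Qt·(Im 𝔷, Im 𝔷) > 0}, and hence defines a holomorphic function on H(L(Qt)). -/
open Complex Matrix
open scoped Real BigOperators Classical

noncomputable section

/-!
The quantity `|φ(τ, 𝔷)| exp(-π t (Im 𝔷, Im 𝔷) / Im τ)` is unchanged by the Heisenberg action and
is multiplied by `|cτ + d| ^ k` under `SL₂(ℤ)`: as `SL₂(ℤ)` is generated by torsion, its
multiplier system is unitary, and the reflections `𝔷 ↦ xτ + y - 𝔷` force the Heisenberg character
to be unitary. Translating `Im 𝔷` into the unit cube times `Im τ` and using that the Fourier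
coefficients are supported on `(l, l) ≤ 2nt`, one bounds it on `Im τ ≥ 1/2`. Every `τ` has a
translate `Aτ` there with `|cτ + d| ≤ 1`, and `|cτ + d| ≥ min(1, Im τ)`, so in general it is
`O((1 + 1 / Im τ) ^ |k|)`.

The points `(aτ + bQ) / d` with `ad = m` have imaginary part `a Im τ / d`, so this turns into a
bound for the `m`-th Hecke translate which is polynomial in `m` up to the factor
`exp(π t m (Im 𝔷, Im 𝔷) / Im τ)`. On the tube domain `|exp(2πi(m/Q)ω)|` beats this factor
exponentially in `m`, locally uniformly.
-/

section NormalConvergence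

open Filter Topology

variable {α X E F : Type*} [TopologicalSpace X] [NormedAddCommGroup E] [NormedSpace ℂ E]
  [NormedAddCommGroup F]

/-- Normal convergence of the series `∑ i, f i` on `U`: near each point of `U` it has a summable
majorant. -/
def NormallySummableOn (f : α → X → F) (U : Set X) : Prop :=
  ∀ x ∈ U, ∃ u : α → ℝ, Summable u ∧ ∀ᶠ y in 𝓝 x, ∀ i, ‖f i y‖ ≤ u i

namespace NormallySummableOn

theorem summable_norm {f : α → X → F} {U : Set X} (h : NormallySummableOn f U) {x : X}
    (hx : x ∈ U) : Summable fun i => ‖f i x‖ := by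
  obtain ⟨u, hu, hfu⟩ := h x hx
  exact hu.of_nonneg_of_le (fun _ => norm_nonneg _) hfu.self_of_nhds

theorem tendstoLocallyUniformlyOn_tsum [CompleteSpace F] {f : α → X → F} {U : Set X}
    (h : NormallySummableOn f U) :
    TendstoLocallyUniformlyOn (fun s : Finset α => fun x => ∑ i ∈ s, f i x)
      (fun x => ∑' i, f i x) atTop U := by
  intro V hV x hx
  obtain ⟨u, hu, hfu⟩ := h x hx
  exact ⟨{y | ∀ i, ‖f i y‖ ≤ u i}, mem_nhdsWithin_of_mem_nhds hfu,
    tendstoUniformlyOn_tsum hu (fun i _ (hy : ∀ i, _ ≤ _) => hy i) V hV⟩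

end NormallySummableOn

theorem norm_fderiv_le_of_forall_mem_ball_norm_le [NormedSpace ℂ F] {g : E → F} {c : E} {r M : ℝ}
    (hr : 0 < r) (hg : DifferentiableOn ℂ g (Metric.ball c r))
    (hM : ∀ x ∈ Metric.ball c r, ‖g x‖ ≤ M) : ‖fderiv ℂ g c‖ ≤ 2 * M / r := by
  refine norm_fderiv_le_div_of_mapsTo_ball hg (fun x hx => ?_) hr
  rw [Metric.mem_closedBall, dist_eq_norm]
  linarith [norm_sub_le (g x) (g c), hM x hx, hM c (Metric.mem_ball_self hr)]

theorem NormallySummableOn.differentiableOn_tsum [NormedSpace ℂ F] [CompleteSpace F]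
    {f : α → E → F} {U : Set E} (h : NormallySummableOn f U) (hU : IsOpen U)
    (hf : ∀ i, DifferentiableOn ℂ (f i) U) :
    DifferentiableOn ℂ (fun x => ∑' i, f i x) U := by
  intro x hx
  obtain ⟨u, hu, hfu⟩ := h x hx
  obtain ⟨r, hr, hball⟩ := Metric.eventually_nhds_iff_ball.1 (hfu.and (hU.mem_nhds hx))
  have hsub {y : E} (hy : y ∈ Metric.ball x (r / 2)) :
      Metric.ball y (r / 2) ⊆ Metric.ball x r :=
    Metric.ball_subset_ball' (by linarith [Metric.mem_ball.1 hy])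
  have hdiff (i : α) : DifferentiableOn ℂ (f i) (Metric.ball x r) :=
    (hf i).mono fun y hy => (hball y hy).2
  have hmem : x ∈ Metric.ball x (r / 2) := Metric.mem_ball_self (half_pos hr)
  have hfderiv (i : α) (y : E) (hy : y ∈ Metric.ball x (r / 2)) :
      HasFDerivAt (f i) (fderiv ℂ (f i) y) y :=
    ((hdiff i).differentiableAt <| Metric.isOpen_ball.mem_nhds <|
      hsub hy (Metric.mem_ball_self (half_pos hr))).hasFDerivAt
  have hbound (i : α) (y : E) (hy : y ∈ Metric.ball x (r / 2)) :
      ‖fderiv ℂ (f i) y‖ ≤ 2 * u i / (r / 2) :=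
    norm_fderiv_le_of_forall_mem_ball_norm_le (half_pos hr) ((hdiff i).mono (hsub hy))
      fun w hw => (hball w (hsub hy hw)).1 i
  exact (hasFDerivAt_tsum_of_isPreconnected ((hu.mul_left 2).div_const _) Metric.isOpen_ball
    (convex_ball x (r / 2)).isPreconnected hfderiv hbound hmem
    (h.summable_norm hx).of_norm hmem).differentiableAt.differentiableWithinAt

end NormalConvergence

section ModularGroup

open UpperHalfPlane ModularGroup

theorem SL2Z.monoidHom_eq_one {M : Type*} [Monoid M] [IsMulTorsionFree M] (ψ : SL2Z →* M) :
    ψ = 1 := by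
  have hS : ψ S = 1 := by
    rw [← pow_eq_one_iff_left (n := 4) (by norm_num), ← map_pow,
      show S ^ 4 = 1 by decide, map_one]
  have hST : ψ S * ψ T = 1 := by
    rw [← pow_eq_one_iff_left (n := 6) (by norm_num), ← map_mul, ← map_pow,
      show (S * T) ^ 6 = 1 by decide, map_one]
  refine MonoidHom.eq_of_eqOn_dense SpecialLinearGroup.SL2Z_generators ?_
  rintro A (rfl | rfl)
  · exact hS
  · simpa [hS] using hST

theorem SL2Z.denom_mul (A B : SL2Z) (τ : ℍ) :
    denom (A * B : SL2Z) τ = denom A (B • τ : ℍ) * denom B τ := by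
  rw [map_mul, map_mul, denom_cocycle _ _ τ.im_ne_zero, sl_moeb, coe_smul_of_det_pos (by simp)]

theorem SL2Z.min_one_im_le_norm_denom (A : SL2Z) (τ : ℍ) : min 1 τ.im ≤ ‖denom A τ‖ := by
  have hdenom := denom_apply A τ
  rcases eq_or_ne (A 1 0) 0 with hc | hc
  · have hd : A 1 1 ≠ 0 := fun hd => by
      have hdet := det_fin_two A.1
      simp [hc, hd] at hdet
    refine (min_le_left _ _).trans ?_
    rw [hdenom, hc, Int.cast_zero, zero_mul, zero_add, norm_intCast]
    exact_mod_cast Int.one_le_abs hd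
  · have hc' : (1 : ℝ) ≤ |(A 1 0 : ℝ)| := by exact_mod_cast Int.one_le_abs hc
    calc min 1 τ.im ≤ |(A 1 0 : ℝ)| * τ.im :=
          (min_le_right _ _).trans (le_mul_of_one_le_left τ.im_pos.le hc')
      _ = |(denom A τ).im| := by simp [hdenom, abs_mul, abs_of_pos τ.im_pos]
      _ ≤ ‖denom A τ‖ := abs_im_le_norm _

theorem SL2Z.inv_norm_denom_le (A : SL2Z) (τ : ℍ) : ‖denom A τ‖⁻¹ ≤ 1 + (τ.im)⁻¹ := by
  have hv : 0 < (τ.im)⁻¹ := inv_pos.2 τ.im_pos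
  refine (inv_anti₀ (lt_min one_pos τ.im_pos) (min_one_im_le_norm_denom A τ)).trans ?_
  rcases min_choice 1 τ.im with h | h <;> rw [h] <;> linarith

end ModularGroup

section GramForm

open Filter Topology

variable {ι : Type*} {S : Matrix ι ι ℤ}

theorem isSymm_of_posSemidef_map (hS : (S.map ((↑) : ℤ → ℝ)).PosSemidef) : S.IsSymm :=
  Matrix.map_injective Int.cast_injective hS.1

variable [Fintype ι]

theorem bilinR_eq_toBilin' (x y : ι → ℝ) :
    bilinR S x y = Matrix.toBilin' (S.map ((↑) : ℤ → ℝ)) x y := by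
  simp [bilinR, Matrix.toBilin'_apply]

theorem bilinR_self_nonneg (hS : (S.map ((↑) : ℤ → ℝ)).PosSemidef) (x : ι → ℝ) :
    0 ≤ bilinR S x x := by
  simpa [bilinR_eq_toBilin', Matrix.toBilin'_apply'] using hS.dotProduct_mulVec_nonneg x

theorem bilinR_comm (hS : S.IsSymm) (x y : ι → ℝ) : bilinR S x y = bilinR S y x := by
  simp only [bilinR]
  rw [Finset.sum_comm]
  refine Finset.sum_congr rfl fun i _ => Finset.sum_congr rfl fun j _ => ?_
  rw [hS.apply]
  ring

theorem bilinR_smul_smul (a b : ℝ) (x y : ι → ℝ) :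
    bilinR S (a • x) (b • y) = a * b * bilinR S x y := by
  simp only [bilinR_eq_toBilin', map_smul, LinearMap.smul_apply, smul_eq_mul]
  ring

theorem bilinR_add_smul_self (hS : S.IsSymm) (x y : ι → ℝ) (c : ℝ) :
    bilinR S (x + c • y) (x + c • y)
      = bilinR S x x + 2 * c * bilinR S x y + c ^ 2 * bilinR S y y := by
  have hxy := bilinR_comm hS x y
  simp only [bilinR_eq_toBilin', map_add, map_smul, LinearMap.add_apply, LinearMap.smul_apply,
    smul_eq_mul] at hxy ⊢
  rw [← hxy]
  ring

theorem bilinR_ratCast (x y : ι → ℚ) :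
    bilinR S (fun i => (x i : ℝ)) (fun i => (y i : ℝ)) = bilinQ S x y := by
  simp [bilinR, bilinQ]

theorem bilinR_intCast (x y : ι → ℤ) :
    bilinR S (fun i => (x i : ℝ)) (fun i => (y i : ℝ)) = bilinZ S x y := by
  simp [bilinR, bilinZ]

theorem bilinC_ofReal_im (x : ι → ℝ) (z : ι → ℂ) :
    (bilinC S (fun i => (x i : ℂ)) z).im = bilinR S x fun i => (z i).im := by
  simp only [bilinC, bilinR, im_sum]
  refine Finset.sum_congr rfl fun i _ => Finset.sum_congr rfl fun j _ => ?_
  rw [← im_ofReal_mul, ofReal_mul, ofReal_intCast]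

theorem IsEvenPosDef.posSemidef (hS : IsEvenPosDef S) : (S.map ((↑) : ℤ → ℝ)).PosSemidef := by
  refine .of_dotProduct_mulVec_nonneg
    ((conjTranspose_eq_transpose_of_trivial _).trans (hS.symm.map _)) fun x => ?_
  suffices 0 ≤ bilinR S x x by
    simpa [bilinR_eq_toBilin', Matrix.toBilin'_apply'] using this
  have hdense : DenseRange fun (x : ι → ℚ) i => (x i : ℝ) :=
    DenseRange.piMap fun _ => Rat.denseRange_cast
  refine hdense.induction_on x (isClosed_le continuous_const ?_) fun q => ?_
  · unfold bilinR
    fun_prop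
  · rw [bilinR_ratCast]
    rcases eq_or_ne q 0 with rfl | hq
    · simp [bilinQ]
    · exact_mod_cast (hS.posdef q hq).le

theorem add_bilinR_add_nonneg_of_bilinR_self_le (hS : (S.map ((↑) : ℤ → ℝ)).PosSemidef)
    {n t : ℝ} (hn : 0 ≤ n) (ht : 0 ≤ t) {l : ι → ℝ} (hl : bilinR S l l ≤ 2 * n * t)
    (w : ι → ℝ) : 0 ≤ n + bilinR S l w + t / 2 * bilinR S w w := by
  -- For `s > t`, expanding `0 ≤ (l + s w, l + s w)` and dividing by `2 s` gives the claim with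
  -- `s` in place of `t`; letting `s → t` also covers `t = 0`.
  have hlim : Tendsto (fun s : ℝ => n + bilinR S l w + s / 2 * bilinR S w w) (𝓝[>] t)
      (𝓝 (n + bilinR S l w + t / 2 * bilinR S w w)) :=
    (Continuous.tendsto (by fun_prop) t).mono_left nhdsWithin_le_nhds
  refine ge_of_tendsto hlim (eventually_mem_nhdsWithin.mono fun s (hs : t < s) => ?_)
  have hsq := bilinR_self_nonneg hS (l + s • w)
  rw [bilinR_add_smul_self (isSymm_of_posSemidef_map hS)] at hsq
  refine nonneg_of_mul_nonneg_right (a := 2 * s) ?_ (by linarith)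
  nlinarith [mul_le_mul_of_nonneg_left hs.le hn]

theorem exists_zero_one_vertex_bilinR_le (x : ι → ℝ) {w : ι → ℝ} (hw : w ∈ Set.Icc 0 1) :
    ∃ y ∈ Fintype.piFinset fun _ : ι => ({0, 1} : Finset ℝ), bilinR S x y ≤ bilinR S x w := by
  have hhull : w ∈ convexHull ℝ (Set.univ.pi fun _ : ι => ({0, 1} : Set ℝ)) := by
    rw [convexHull_pi]
    intro i _
    rw [convexHull_pair, segment_eq_Icc zero_le_one]
    exact ⟨hw.1 i, hw.2 i⟩
  obtain ⟨y, hy, hyw⟩ := ((Matrix.toBilin' (S.map ((↑) : ℤ → ℝ)) x).concaveOn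
    (convex_convexHull ℝ _)).exists_le_of_mem_convexHull (subset_convexHull ℝ _) hhull
  refine ⟨y, Fintype.mem_piFinset.2 fun i => by simpa using hy i trivial, ?_⟩
  simpa only [bilinR_eq_toBilin'] using hyw

end GramForm

section FourierExpansion

variable {ι : Type*} [Fintype ι] {S : Matrix ι ι ℤ} {k t : ℚ} {χ : SL2Z → ℂ}
  {ν : (ι → ℤ) → (ι → ℤ) → ℂ} {f : ℚ × (ι → ℚ) → ℂ} {φ : ℂ → (ι → ℂ) → ℂ}

/-- The term of index `p = (n, l)` in the Fourier expansion of a Jacobi form. -/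
def fourierTerm (S : Matrix ι ι ℤ) (f : ℚ × (ι → ℚ) → ℂ) (τ : ℂ) (z : ι → ℂ)
    (p : ℚ × (ι → ℚ)) : ℂ :=
  f p * Complex.exp (2 * (π : ℂ) * I * ((p.1 : ℂ) * τ + bilinC S (fun i => (p.2 i : ℂ)) z))

theorem norm_exp_pi_mul_I_mul (r : ℝ) (w : ℂ) :
    ‖Complex.exp (π * I * r * w)‖ = Real.exp (-(π * r * w.im)) := by
  rw [norm_exp, mul_right_comm (π : ℂ), mul_assoc, ← ofReal_mul, re_ofReal_mul, I_mul_re, mul_neg]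

theorem norm_fourierTerm (τ : ℂ) (z : ι → ℂ) (p : ℚ × (ι → ℚ)) :
    ‖fourierTerm S f τ z p‖ = ‖f p‖ * Real.exp (-(2 * π) *
      (p.1 * τ.im + bilinR S (fun i => (p.2 i : ℝ)) fun i => (z i).im)) := by
  have him : ((p.1 : ℂ) * τ).im = p.1 * τ.im := mod_cast im_ofReal_mul (p.1 : ℝ) τ
  rw [fourierTerm, norm_mul, ← bilinC_ofReal_im, ← him, ← add_im, neg_mul, mul_comm 2 π,
    ← norm_exp_pi_mul_I_mul]
  push_cast
  ring_nf

/-- The invariant norm `|φ(τ, 𝔷)| exp(-π t (Im 𝔷, Im 𝔷) / Im τ)` of a function of index `t`, up to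
the power of `Im τ` that would make it invariant under `SL₂(ℤ)`. -/
def jacobiNorm (S : Matrix ι ι ℤ) (t : ℝ) (φ : ℂ → (ι → ℂ) → ℂ) (τ : ℂ) (z : ι → ℂ) : ℝ :=
  ‖φ τ z‖ * Real.exp (-(π * t * bilinR S (fun i => (z i).im) (fun i => (z i).im) / τ.im))

theorem jacobiNorm_nonneg {t : ℝ} (τ : ℂ) (z : ι → ℂ) : 0 ≤ jacobiNorm S t φ τ z := by
  unfold jacobiNorm
  positivity

theorem jacobiNorm_eq_zero {t : ℝ} {τ : ℂ} {z : ι → ℂ} :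
    jacobiNorm S t φ τ z = 0 ↔ φ τ z = 0 := by
  simp [jacobiNorm]

namespace IsJacobiForm

theorem hasSum_fourierTerm (hφ : IsJacobiForm S k t χ ν f φ) {τ : ℂ} (hτ : 0 < τ.im)
    (z : ι → ℂ) : HasSum (fourierTerm S f τ z) (φ τ z) :=
  hφ.expansion τ hτ z

theorem exists_vertex_norm_fourierTerm_le (hφ : IsJacobiForm S k t χ ν f φ)
    (hS : (S.map ((↑) : ℤ → ℝ)).PosSemidef) (ht : 0 ≤ t) {v : ℝ} (hv : 0 ≤ v) {τ : ℂ}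
    (hvτ : v ≤ τ.im) {w : ι → ℝ} (hw : w ∈ Set.Icc 0 1) {z : ι → ℂ}
    (hz : (fun i => (z i).im) = τ.im • w) (p : ℚ × (ι → ℚ)) :
    ∃ y ∈ Fintype.piFinset fun _ : ι => ({0, 1} : Finset ℝ),
      ‖fourierTerm S f τ z p‖ ≤ Real.exp (π * t * τ.im * bilinR S w w) *
        ‖fourierTerm S f (v * I) (fun i => (v * y i : ℝ) * I) p‖ := by
  obtain ⟨y, hy, hyw⟩ := exists_zero_one_vertex_bilinR_le (S := S) (fun i => (p.2 i : ℝ)) hw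
  refine ⟨y, hy, ?_⟩
  rcases eq_or_ne (f p) 0 with hp | hp
  · simp [fourierTerm, hp]
  obtain ⟨hn, -, hl⟩ := hφ.support p hp
  have hexponent := add_bilinR_add_nonneg_of_bilinR_self_le hS (n := p.1) (t := t)
    (mod_cast hn) (mod_cast ht) (by rw [bilinR_ratCast]; exact_mod_cast sub_nonneg.1 hl) w
  have hww : 0 ≤ t / 2 * bilinR S w w :=
    mul_nonneg (div_nonneg (mod_cast ht) zero_le_two) (bilinR_self_nonneg hS w)
  have hbilin (c : ℝ) (u : ι → ℝ) :
      bilinR S (fun i => (p.2 i : ℝ)) (c • u) = c * bilinR S (fun i => (p.2 i : ℝ)) u := by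
    simpa using bilinR_smul_smul (S := S) 1 c (fun i => (p.2 i : ℝ)) u
  have hzy : (fun i => (((v * y i : ℝ) : ℂ) * I).im) = v • y := by
    ext i
    simp
  rw [norm_fourierTerm, norm_fourierTerm, mul_left_comm, ← Real.exp_add, hz, hzy, hbilin, hbilin,
    im_ofReal_mul, I_im, mul_one]
  gcongr
  have hle : v * (p.1 + bilinR S (fun i => (p.2 i : ℝ)) y)
      ≤ τ.im * (p.1 + bilinR S (fun i => (p.2 i : ℝ)) w + t / 2 * bilinR S w w) :=
    (mul_le_mul_of_nonneg_left (by linarith) hv).trans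
      (mul_le_mul_of_nonneg_right hvτ hexponent)
  linarith [mul_le_mul_of_nonneg_left hle Real.two_pi_pos.le]

theorem exists_jacobiNorm_le_of_mem_Icc (hφ : IsJacobiForm S k t χ ν f φ)
    (hS : (S.map ((↑) : ℤ → ℝ)).PosSemidef) (ht : 0 ≤ t) {v : ℝ} (hv : 0 < v) :
    ∃ C, 0 ≤ C ∧ ∀ τ : ℂ, v ≤ τ.im → ∀ w ∈ Set.Icc (0 : ι → ℝ) 1, ∀ z : ι → ℂ,
      (fun i => (z i).im) = τ.im • w → jacobiNorm S t φ τ z ≤ C := by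
  set N : (ι → ℝ) → ℚ × (ι → ℚ) → ℝ := fun y p =>
    ‖fourierTerm S f (v * I) (fun i => (v * y i : ℝ) * I) p‖
  have hN (y : ι → ℝ) : Summable (N y) :=
    (hφ.hasSum_fourierTerm (by simpa using hv) _).summable.norm
  refine ⟨∑ y ∈ Fintype.piFinset fun _ => {0, 1}, ∑' p, N y p,
    Finset.sum_nonneg fun y _ => tsum_nonneg fun p => norm_nonneg _, fun τ hτ w hw z hz => ?_⟩
  have hbound (p : ℚ × (ι → ℚ)) : ‖fourierTerm S f τ z p‖ ≤
      Real.exp (π * t * τ.im * bilinR S w w) * ∑ y ∈ Fintype.piFinset fun _ => {0, 1}, N y p := by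
    obtain ⟨y, hy, hle⟩ := hφ.exists_vertex_norm_fourierTerm_le hS ht hv.le hτ hw hz p
    refine hle.trans (mul_le_mul_of_nonneg_left ?_ (Real.exp_nonneg _))
    exact Finset.single_le_sum (f := fun y => N y p) (fun _ _ => norm_nonneg _) hy
  have hφle := (hφ.hasSum_fourierTerm (hv.trans_le hτ) z).norm_le_of_bounded
    ((hasSum_sum fun y _ => (hN y).hasSum).mul_left _) hbound
  have hexponent : π * t * bilinR S (fun i => (z i).im) (fun i => (z i).im) / τ.im =
      π * t * τ.im * bilinR S w w := by
    have hτ0 : τ.im ≠ 0 := (hv.trans_le hτ).ne'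
    rw [hz, bilinR_smul_smul]
    field_simp
  rw [jacobiNorm, hexponent, Real.exp_neg, ← div_eq_mul_inv, div_le_iff₀' (Real.exp_pos _)]
  exact hφle

end IsJacobiForm

end FourierExpansion

section Invariance

open UpperHalfPlane hiding I

variable {ι : Type*} [Fintype ι] {S : Matrix ι ι ℤ} {k : ℤ} {t : ℚ} {χ : SL2Z → ℂ}
  {ν : (ι → ℤ) → (ι → ℤ) → ℂ} {f : ℚ × (ι → ℚ) → ℂ} {φ : ℂ → (ι → ℂ) → ℂ}

theorem im_div_mul_im_div_mul_normSq {j : ℂ} (hj : j ≠ 0) (z w : ℂ) :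
    (z / j).im * (w / j).im * normSq j = z.im * w.im - j.im * (z * w / j).im := by
  obtain ⟨z, rfl⟩ : ∃ u, z = u * j := ⟨z / j, (div_mul_cancel₀ z hj).symm⟩
  obtain ⟨w, rfl⟩ : ∃ u, w = u * j := ⟨w / j, (div_mul_cancel₀ w hj).symm⟩
  rw [mul_mul_mul_comm, ← mul_assoc, mul_div_cancel_right₀ _ hj, mul_div_cancel_right₀ _ hj,
    mul_div_cancel_right₀ _ hj]
  simp only [mul_im, mul_re, normSq_apply]
  ring

theorem bilinR_im_div_mul_normSq {j : ℂ} (hj : j ≠ 0) (z w : ι → ℂ) :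
    bilinR S (fun i => (z i / j).im) (fun i => (w i / j).im) * normSq j =
      bilinR S (fun i => (z i).im) (fun i => (w i).im) - j.im * (bilinC S z w / j).im := by
  simp only [bilinR, bilinC, Finset.sum_mul, Finset.sum_div, im_sum, Finset.mul_sum,
    ← Finset.sum_sub_distrib]
  refine Finset.sum_congr rfl fun i _ => Finset.sum_congr rfl fun i' _ => ?_
  have hS : (z i * S i i' * w i' / j).im = S i i' * (z i * w i' / j).im := by
    rw [← im_ofReal_mul, ofReal_intCast]
    ring_nf
  rw [hS]
  linear_combination (S i i' : ℝ) * im_div_mul_im_div_mul_normSq hj (z i) (w i')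

namespace IsJacobiForm

theorem apply_smul (hφ : IsJacobiForm S k t χ ν f φ) (A : SL2Z) (τ : ℍ) (z : ι → ℂ) :
    φ (A • τ : ℍ) (fun i => z i / denom A τ) = χ A * denom A τ ^ k *
      Complex.exp (π * I * t * A 1 0 * bilinC S z z / denom A τ) * φ τ z := by
  have hmodular := hφ.modular A τ τ.im_pos z
  rw [Rat.cast_intCast, cpow_intCast] at hmodular
  rw [coe_specialLinearGroup_apply, ModularGroup.denom_apply]
  simpa using hmodular

theorem jacobiNorm_smul_eq_norm_mul (hφ : IsJacobiForm S k t χ ν f φ) (A : SL2Z) (τ : ℍ)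
    (z : ι → ℂ) : jacobiNorm S t φ (A • τ : ℍ) (fun i => z i / denom A τ) =
      ‖χ A‖ * ‖denom A τ‖ ^ k * jacobiNorm S t φ τ z := by
  have hj := denom_ne_zero A τ
  have hbilin := bilinR_im_div_mul_normSq (S := S) hj z z
  have hjim : (denom A τ).im = A 1 0 * τ.im := by simp [ModularGroup.denom_apply]
  have hnorm : ‖Complex.exp (π * I * t * A 1 0 * bilinC S z z / denom A τ)‖ =
      Real.exp (-(π * (t * A 1 0 : ℝ) * (bilinC S z z / denom A τ).im)) := by
    rw [← norm_exp_pi_mul_I_mul]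
    push_cast
    ring_nf
  have hexp : -(π * (t * A 1 0) * (bilinC S z z / denom A τ).im) +
      -(π * t * bilinR S (fun i => (z i / denom A τ).im) (fun i => (z i / denom A τ).im) /
        (τ.im / normSq (denom A τ))) =
      -(π * t * bilinR S (fun i => (z i).im) (fun i => (z i).im) / τ.im) := by
    have hτ := τ.im_ne_zero
    rw [div_div_eq_mul_div, mul_assoc _ _ (normSq _), hbilin, hjim]
    field_simp
    ring
  rw [jacobiNorm, jacobiNorm, hφ.apply_smul, coe_im, coe_im, ModularGroup.im_smul_eq_div_normSq,
    ← hexp, Real.exp_add, ← hnorm, norm_mul, norm_mul, norm_mul, norm_zpow]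
  ring

theorem jacobiNorm_add_eq_norm_mul (hφ : IsJacobiForm S k t χ ν f φ) (hS : S.IsSymm)
    (x y : ι → ℤ) {τ : ℂ} (hτ : 0 < τ.im) (z : ι → ℂ) :
    jacobiNorm S t φ τ (fun i => z i + x i * τ + y i) = ‖ν x y‖ * jacobiNorm S t φ τ z := by
  have him : (fun i => (z i + x i * τ + y i).im) =
      (fun i => (z i).im) + τ.im • fun i => (x i : ℝ) := by
    ext i
    simp [mul_comm]
  have hbilinC : (bilinC S (fun i => (x i : ℂ)) z).im =
      bilinR S (fun i => (z i).im) fun i => (x i : ℝ) := by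
    rw [bilinR_comm hS, ← bilinC_ofReal_im]
    simp only [ofReal_intCast]
  have hnorm : ‖Complex.exp (-(π * I * t) *
        (bilinZ S x x * τ + 2 * bilinC S (fun i => (x i : ℂ)) z))‖ =
      Real.exp (-(π * (-t) * (bilinR S (fun i => (x i : ℝ)) (fun i => (x i : ℝ)) * τ.im +
        2 * bilinR S (fun i => (z i).im) fun i => (x i : ℝ)))) := by
    rw [bilinR_intCast, ← hbilinC, ← im_ofReal_mul, ← im_ofReal_mul, ← add_im,
      ← norm_exp_pi_mul_I_mul]
    push_cast
    ring_nf
  rw [jacobiNorm, jacobiNorm, hφ.elliptic x y τ hτ z, him, bilinR_add_smul_self hS, norm_mul,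
    norm_mul, hnorm, mul_right_comm ‖ν x y‖, mul_assoc, ← Real.exp_add, mul_assoc]
  congr 3
  field_simp
  ring

theorem norm_character_mul (hφ : IsJacobiForm S k t χ ν f φ) {τ : ℍ} {z : ι → ℂ}
    (hz : φ τ z ≠ 0) (A B : SL2Z) : ‖χ (A * B)‖ = ‖χ A‖ * ‖χ B‖ := by
  have hAB := hφ.jacobiNorm_smul_eq_norm_mul (A * B) τ z
  have hA := hφ.jacobiNorm_smul_eq_norm_mul A (B • τ) fun i => z i / denom B τ
  simp only [hφ.jacobiNorm_smul_eq_norm_mul B τ z, div_div] at hA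
  simp only [SL2Z.denom_mul, mul_smul, norm_mul, mul_zpow, mul_comm (denom A (B • τ : ℍ))] at hAB
  have hdA := norm_ne_zero_iff.2 (denom_ne_zero A (B • τ))
  have hdB := norm_ne_zero_iff.2 (denom_ne_zero B τ)
  have hN : jacobiNorm S t φ τ z ≠ 0 := jacobiNorm_eq_zero.not.2 hz
  refine mul_right_cancel₀
    (mul_ne_zero (mul_ne_zero (zpow_ne_zero k hdB) (zpow_ne_zero k hdA)) hN) ?_
  linear_combination hA - hAB

theorem norm_character_eq_one (hφ : IsJacobiForm S k t χ ν f φ) {τ : ℍ} {z : ι → ℂ}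
    (hz : φ τ z ≠ 0) (A : SL2Z) : ‖χ A‖ = 1 := by
  have hone : ‖χ 1‖₊ = 1 := by
    have hN : jacobiNorm S t φ τ z ≠ 0 := jacobiNorm_eq_zero.not.2 hz
    have hself : ‖χ 1‖ * jacobiNorm S t φ τ z = jacobiNorm S t φ τ z := by
      simpa using (hφ.jacobiNorm_smul_eq_norm_mul 1 τ z).symm
    exact NNReal.eq ((mul_eq_right₀ hN).1 hself)
  let ψ : SL2Z →* NNReal :=
    { toFun := fun A => ‖χ A‖₊
      map_one' := hone
      map_mul' := fun A B => NNReal.eq (hφ.norm_character_mul hz A B) }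
  exact congrArg NNReal.toReal (DFunLike.congr_fun (SL2Z.monoidHom_eq_one ψ) A)

theorem jacobiNorm_smul (hφ : IsJacobiForm S k t χ ν f φ) (A : SL2Z) (τ : ℍ) (z : ι → ℂ) :
    jacobiNorm S t φ (A • τ : ℍ) (fun i => z i / denom A τ) =
      ‖denom A τ‖ ^ k * jacobiNorm S t φ τ z := by
  rw [hφ.jacobiNorm_smul_eq_norm_mul]
  by_cases hz : φ τ z = 0
  · simp [jacobiNorm_eq_zero.2 hz]
  · rw [hφ.norm_character_eq_one hz, one_mul]

theorem jacobiNorm_neg (hφ : IsJacobiForm S k t χ ν f φ) (τ : ℍ) (z : ι → ℂ) :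
    jacobiNorm S t φ τ (fun i => -z i) = jacobiNorm S t φ τ z := by
  have hdenom : denom (-1 : SL2Z) τ = -1 := by
    rw [ModularGroup.denom_apply]
    simp
  simpa only [hdenom, ModularGroup.SL_neg_smul, one_smul, div_neg, div_one, norm_neg, norm_one,
    _root_.one_zpow, one_mul] using hφ.jacobiNorm_smul (-1) τ z

theorem norm_heisenberg_eq_one (hφ : IsJacobiForm S k t χ ν f φ) (hS : S.IsSymm)
    {τ : ℍ} {z : ι → ℂ} (hz : φ τ z ≠ 0) (x y : ι → ℤ) : ‖ν x y‖ = 1 := by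
  -- The reflection `w ↦ xτ + y - w` is the composition of `w ↦ -w` with the translation by
  -- `xτ + y`; being an involution it forces `‖ν x y‖ ^ 2 = 1`.
  have htranslate := hφ.jacobiNorm_add_eq_norm_mul hS x y τ.im_pos
  have hreflect := htranslate fun i => -(z i + x i * τ + y i)
  have hfix : (fun i => -(z i + x i * τ + y i) + x i * τ + y i) = fun i => -z i := by
    ext i
    ring
  rw [hfix, hφ.jacobiNorm_neg, hφ.jacobiNorm_neg τ fun i => z i + x i * τ + y i, htranslate,
    ← mul_assoc, right_eq_mul₀ (jacobiNorm_eq_zero.not.2 hz)] at hreflect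
  exact (pow_eq_one_iff_of_nonneg (norm_nonneg _) two_ne_zero).1 ((sq _).trans hreflect)

theorem jacobiNorm_add (hφ : IsJacobiForm S k t χ ν f φ) (hS : S.IsSymm) (x y : ι → ℤ)
    (τ : ℍ) (z : ι → ℂ) :
    jacobiNorm S t φ τ (fun i => z i + x i * τ + y i) = jacobiNorm S t φ τ z := by
  rw [hφ.jacobiNorm_add_eq_norm_mul hS x y τ.im_pos]
  by_cases hz : φ τ z = 0
  · simp [jacobiNorm_eq_zero.2 hz]
  · rw [hφ.norm_heisenberg_eq_one hS hz, one_mul]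

theorem norm_character_mul_apply (hφ : IsJacobiForm S k t χ ν f φ) (A : SL2Z) {τ : ℂ}
    (hτ : 0 < τ.im) (z : ι → ℂ) : ‖χ A * φ τ z‖ = ‖φ τ z‖ := by
  by_cases hz : φ τ z = 0
  · simp [hz]
  · rw [norm_mul, hφ.norm_character_eq_one (τ := ⟨τ, hτ⟩) hz, one_mul]

end IsJacobiForm

end Invariance

section Growth

open UpperHalfPlane hiding I

variable {ι : Type*} [Fintype ι] {S : Matrix ι ι ℤ} {k : ℤ} {t : ℚ} {χ : SL2Z → ℂ}
  {ν : (ι → ℤ) → (ι → ℤ) → ℂ} {f : ℚ × (ι → ℚ) → ℂ} {φ : ℂ → (ι → ℂ) → ℂ}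

/-- `φ` grows at most like `(1 + 1 / Im τ) ^ κ` in the invariant norm of index `t`, with implied
constant `C`. -/
def HasModerateGrowth (S : Matrix ι ι ℤ) (t : ℝ) (φ : ℂ → (ι → ℂ) → ℂ) (κ : ℕ) (C : ℝ) : Prop :=
  ∀ τ : ℂ, 0 < τ.im → ∀ z, jacobiNorm S t φ τ z ≤ C * (1 + τ.im⁻¹) ^ κ

namespace IsJacobiForm

theorem exists_jacobiNorm_le_of_le_im (hφ : IsJacobiForm S k t χ ν f φ)
    (hS : (S.map ((↑) : ℤ → ℝ)).PosSemidef) (ht : 0 ≤ t) {v : ℝ} (hv : 0 < v) :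
    ∃ C, 0 ≤ C ∧ ∀ τ : ℍ, v ≤ τ.im → ∀ z, jacobiNorm S t φ τ z ≤ C := by
  obtain ⟨C, hC, hle⟩ := hφ.exists_jacobiNorm_le_of_mem_Icc hS ht hv
  refine ⟨C, hC, fun τ hτ z => ?_⟩
  let x : ι → ℤ := fun i => -⌊(z i).im / τ.im⌋
  rw [← hφ.jacobiNorm_add (isSymm_of_posSemidef_map hS) x 0]
  refine hle τ hτ (fun i => Int.fract ((z i).im / τ.im))
    ⟨fun i => Int.fract_nonneg _, fun i => (Int.fract_lt_one _).le⟩ _ ?_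
  ext i
  have hτ0 := τ.im_ne_zero
  simp only [x, add_im, Pi.zero_apply, Pi.smul_apply, smul_eq_mul, Int.fract, ← ofReal_intCast,
    im_ofReal_mul, ofReal_im, coe_im]
  field_simp
  push_cast
  ring

theorem exists_hasModerateGrowth (hφ : IsJacobiForm S k t χ ν f φ)
    (hS : (S.map ((↑) : ℤ → ℝ)).PosSemidef) (ht : 0 ≤ t) :
    ∃ C, 0 ≤ C ∧ HasModerateGrowth S t φ k.natAbs C := by
  obtain ⟨C, hC, hle⟩ := hφ.exists_jacobiNorm_le_of_le_im hS ht one_half_pos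
  refine ⟨C, hC, fun τ hτ z => ?_⟩
  lift τ to ℍ using hτ
  rw [coe_im]
  obtain ⟨A, hA, hdenom⟩ := ModularGroup.exists_one_half_le_im_smul_and_norm_denom_le τ
  have hpos : 0 < ‖denom A τ‖ := norm_pos_iff.2 (denom_ne_zero A τ)
  have hinv := SL2Z.inv_norm_denom_le A τ
  calc jacobiNorm S t φ τ z
      = ‖denom A τ‖⁻¹ ^ k * jacobiNorm S t φ (A • τ : ℍ) fun i => z i / denom A τ := by
        rw [hφ.jacobiNorm_smul, ← mul_assoc, ← mul_zpow, inv_mul_cancel₀ hpos.ne',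
          _root_.one_zpow, one_mul]
    _ ≤ ‖denom A τ‖⁻¹ ^ (k.natAbs : ℤ) * C := by
        gcongr
        · exact jacobiNorm_nonneg _ _
        · exact one_le_inv_iff₀.2 ⟨hpos, hdenom⟩
        · exact Int.le_natAbs
        · exact hle _ hA _
    _ ≤ C * (1 + (τ.im)⁻¹) ^ k.natAbs := by
        rw [zpow_natCast, mul_comm]
        gcongr

end IsJacobiForm

end Growth

section HeckeSum

variable {ι : Type*} [Fintype ι] {S : Matrix ι ι ℤ} {k : ℤ} {t : ℝ} {χ : SL2Z → ℂ}
  {φ : ℂ → (ι → ℂ) → ℂ} {κ : ℕ} {C : ℝ}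

theorem im_mul_add_mul_div (a b Q d : ℕ) (τ : ℂ) : ((a * τ + b * Q) / d : ℂ).im = a * τ.im / d := by
  rw [div_natCast_im]
  simp

theorem one_add_inv_mul_div_le {a d : ℕ} (ha : 0 < a) (hd : 0 < d) {v : ℝ} (hv : 0 < v) :
    1 + (a * v / d)⁻¹ ≤ (a * d : ℕ) * (1 + v⁻¹) := by
  have had : (1 : ℝ) ≤ (a * d : ℕ) := mod_cast Nat.mul_pos ha hd
  have hda : (d / a : ℝ) ≤ (a * d : ℕ) := by
    rw [Nat.cast_mul, mul_comm]
    refine (div_le_self d.cast_nonneg (Nat.one_le_cast.2 ha)).trans ?_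
    exact le_mul_of_one_le_right d.cast_nonneg (Nat.one_le_cast.2 ha)
  calc 1 + (a * v / d)⁻¹ = 1 + d / a * v⁻¹ := by
        rw [inv_div, div_mul_eq_div_div, div_eq_mul_inv _ v]
    _ ≤ (a * d : ℕ) + (a * d : ℕ) * v⁻¹ := by gcongr
    _ = (a * d : ℕ) * (1 + v⁻¹) := by ring

theorem HasModerateGrowth.norm_apply_le (hφ : HasModerateGrowth S t φ κ C) (hC : 0 ≤ C) {τ : ℂ}
    (hτ : 0 < τ.im) (z : ι → ℂ) {a d : ℕ} (ha : 0 < a) (hd : 0 < d) (b Q : ℕ) :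
    ‖φ ((a * τ + b * Q) / d) (fun i => a * z i)‖ ≤ C * ((a * d : ℕ) * (1 + τ.im⁻¹)) ^ κ *
      Real.exp (π * t * (a * d : ℕ) * bilinR S (fun i => (z i).im) (fun i => (z i).im) / τ.im) := by
  have him := im_mul_add_mul_div a b Q d τ
  have hgrowth := hφ ((a * τ + b * Q) / d) (by rw [him]; positivity) fun i => a * z i
  have hz : (fun i => (a * z i).im) = (a : ℝ) • fun i => (z i).im := by
    ext i
    simp
  have hexponent : π * t * (a * a * bilinR S (fun i => (z i).im) fun i => (z i).im) /
      (a * τ.im / d) =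
      π * t * (a * d : ℕ) * bilinR S (fun i => (z i).im) (fun i => (z i).im) / τ.im := by
    push_cast
    field_simp
  rw [jacobiNorm, him, hz, bilinR_smul_smul, hexponent, Real.exp_neg, ← div_eq_mul_inv,
    div_le_iff₀ (Real.exp_pos _)] at hgrowth
  refine hgrowth.trans ?_
  gcongr
  exact one_add_inv_mul_div_le ha hd hτ

theorem HasModerateGrowth.norm_heckeSum_term_le (hφ : HasModerateGrowth S t φ κ C) (hC : 0 ≤ C)
    (hχ : ∀ A τ, 0 < τ.im → ∀ z, ‖χ A * φ τ z‖ ≤ ‖φ τ z‖) (A : SL2Z) {m a : ℕ}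
    (ha : a ∈ m.divisors) (b Q : ℕ) {τ : ℂ} (hτ : 0 < τ.im) (z : ι → ℂ) :
    ‖(a : ℂ) ^ k * χ A * φ ((a * τ + b * Q) / (m / a : ℕ)) (fun i => a * z i)‖ ≤
      m ^ k.natAbs * (C * (m * (1 + τ.im⁻¹)) ^ κ *
        Real.exp (π * t * m * bilinR S (fun i => (z i).im) (fun i => (z i).im) / τ.im)) := by
  have ha0 : 0 < a := Nat.pos_of_mem_divisors ha
  have hd0 : 0 < m / a := Nat.div_pos (Nat.divisor_le ha) ha0
  have hpow : (a : ℝ) ^ k ≤ m ^ k.natAbs :=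
    calc (a : ℝ) ^ k ≤ a ^ (k.natAbs : ℤ) :=
          zpow_le_zpow_right₀ (Nat.one_le_cast.2 ha0) Int.le_natAbs
      _ = a ^ k.natAbs := zpow_natCast _ _
      _ ≤ m ^ k.natAbs := pow_le_pow_left₀ a.cast_nonneg (mod_cast Nat.divisor_le ha) _
  have hφle := hφ.norm_apply_le hC hτ z ha0 hd0 b Q
  rw [Nat.mul_div_cancel' (Nat.dvd_of_mem_divisors ha)] at hφle
  rw [mul_assoc, norm_mul, norm_zpow, Complex.norm_natCast]
  refine mul_le_mul hpow ((hχ _ _ ?_ _).trans hφle) (norm_nonneg _) (by positivity)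
  rw [im_mul_add_mul_div]
  positivity

theorem HasModerateGrowth.norm_heckeSum_le (hφ : HasModerateGrowth S t φ κ C) (hC : 0 ≤ C)
    (hχ : ∀ A τ, 0 < τ.im → ∀ z, ‖χ A * φ τ z‖ ≤ ‖φ τ z‖) (σ : ℕ → SL2Z) (Q m : ℕ) {τ : ℂ}
    (hτ : 0 < τ.im) (z : ι → ℂ) :
    ‖heckeSum φ χ σ k Q m τ z‖ ≤ C * (1 + τ.im⁻¹) ^ κ * (m ^ (k.natAbs + κ + 2) *
      Real.exp (π * t * m * bilinR S (fun i => (z i).im) (fun i => (z i).im) / τ.im)) := by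
  set E := Real.exp (π * t * m * bilinR S (fun i => (z i).im) (fun i => (z i).im) / τ.im)
  calc ‖heckeSum φ χ σ k Q m τ z‖
      ≤ ∑ a ∈ m.divisors, ∑ b ∈ Finset.range (m / a),
          (m : ℝ) ^ k.natAbs * (C * (m * (1 + τ.im⁻¹)) ^ κ * E) :=
        norm_sum_le_of_le _ fun a ha => norm_sum_le_of_le _ fun b _ =>
          hφ.norm_heckeSum_term_le hC hχ (σ a) ha b Q hτ z
    _ ≤ ∑ a ∈ m.divisors, m * (m ^ k.natAbs * (C * (m * (1 + τ.im⁻¹)) ^ κ * E)) := by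
        refine Finset.sum_le_sum fun a _ => ?_
        rw [Finset.sum_const, Finset.card_range, nsmul_eq_mul]
        gcongr
        exact Nat.div_le_self m a
    _ ≤ m * (m * (m ^ k.natAbs * (C * (m * (1 + τ.im⁻¹)) ^ κ * E))) := by
        rw [Finset.sum_const, nsmul_eq_mul]
        gcongr
        exact Nat.card_divisors_le_self m
    _ = C * (1 + τ.im⁻¹) ^ κ * (m ^ (k.natAbs + κ + 2) * E) := by
        rw [mul_pow]
        ring

end HeckeSum

section LiftingSeries

open Filter Topology

variable {ι : Type*} [Fintype ι] {S : Matrix ι ι ℤ} {k : ℤ} {χ : SL2Z → ℂ}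
  {φ : ℂ → (ι → ℂ) → ℂ}

/-- The exponential rate of decay `2 Im ω / Q - t (Im 𝔷, Im 𝔷) / Im τ` of the lifting series at
`p = (τ, 𝔷, ω)`. -/
def tubeGap (S : Matrix ι ι ℤ) (t : ℝ) (Q : ℕ) (p : ℂ × (ι → ℂ) × ℂ) : ℝ :=
  2 * p.2.2.im / Q - t * bilinR S (fun i => (p.2.1 i).im) (fun i => (p.2.1 i).im) / p.1.im

theorem continuous_bilinR_im :
    Continuous fun p : ℂ × (ι → ℂ) × ℂ =>
      bilinR S (fun i => (p.2.1 i).im) fun i => (p.2.1 i).im := by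
  unfold bilinR
  fun_prop

theorem isOpen_tubeDom (S : Matrix ι ι ℤ) (N : ℚ) : IsOpen (tubeDom S N) := by
  have hbilin := (continuous_bilinR_im (S := S)).const_mul (N : ℝ)
  simp only [tubeDom, Set.ofPred_and]
  exact (isOpen_lt (by fun_prop) (by fun_prop)).inter <|
    (isOpen_lt (by fun_prop) (by fun_prop)).inter (isOpen_lt hbilin (by fun_prop))

theorem continuousAt_tubeGap (t : ℝ) (Q : ℕ) {p : ℂ × (ι → ℂ) × ℂ} (hp : p.1.im ≠ 0) :
    ContinuousAt (tubeGap S t Q) p :=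
  .sub (by fun_prop) (.div (continuous_bilinR_im.const_mul t).continuousAt (by fun_prop) hp)

theorem tubeGap_pos {t : ℚ} {Q : ℕ} (hQ : 0 < Q) {p : ℂ × (ι → ℂ) × ℂ}
    (hp : p ∈ tubeDom S (Q * t)) : 0 < tubeGap S t Q p := by
  obtain ⟨hτ, -, htube⟩ := hp
  rw [tubeGap, sub_pos, div_lt_div_iff₀ hτ (Nat.cast_pos.2 hQ)]
  push_cast at htube
  linarith

theorem HasModerateGrowth.norm_liftTerm_le {t : ℝ} {κ : ℕ} {C : ℝ}
    (hφ : HasModerateGrowth S t φ κ C) (hC : 0 ≤ C)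
    (hχ : ∀ A τ, 0 < τ.im → ∀ z, ‖χ A * φ τ z‖ ≤ ‖φ τ z‖) (σ : ℕ → SL2Z) (Q : ℕ) (μ : ℤ) (m : ℕ)
    {p : ℂ × (ι → ℂ) × ℂ} (hp : 0 < p.1.im) :
    ‖liftTerm φ χ σ k Q μ m p‖ ≤ C * (1 + p.1.im⁻¹) ^ κ *
      (m ^ (k.natAbs + κ + 1) * Real.exp (-(π * tubeGap S t Q p) * m)) := by
  unfold liftTerm
  split_ifs with hm
  · have hm0 : (m : ℝ) ≠ 0 := mod_cast (zero_lt_one.trans_le hm.1).ne'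
    have hnorm : ‖Complex.exp (2 * π * I * (m / Q) * p.2.2)‖ =
        Real.exp (-(π * (2 * m / Q : ℝ) * p.2.2.im)) := by
      rw [← norm_exp_pi_mul_I_mul]
      push_cast
      ring_nf
    have hexponent : -(π * tubeGap S t Q p) * m = π * t * m *
        bilinR S (fun i => (p.2.1 i).im) (fun i => (p.2.1 i).im) / p.1.im +
        -(π * (2 * m / Q) * p.2.2.im) := by
      rw [tubeGap]
      ring
    rw [norm_mul, norm_mul, norm_inv, norm_natCast, hnorm, hexponent, Real.exp_add]
    refine (mul_le_mul_of_nonneg_right (mul_le_mul_of_nonneg_left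
      (hφ.norm_heckeSum_le hC hχ σ Q m hp p.2.1) (by positivity)) (Real.exp_nonneg _)).trans_eq ?_
    rw [pow_succ (m : ℝ) (k.natAbs + κ + 1)]
    field_simp
  · rw [norm_zero]
    positivity

theorem HasModerateGrowth.normallySummableOn_liftTerm {t : ℚ} {κ : ℕ} {C : ℝ}
    (hφ : HasModerateGrowth S t φ κ C) (hC : 0 ≤ C)
    (hχ : ∀ A τ, 0 < τ.im → ∀ z, ‖χ A * φ τ z‖ ≤ ‖φ τ z‖) (σ : ℕ → SL2Z) {Q : ℕ} (hQ : 0 < Q)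
    (μ : ℤ) : NormallySummableOn (liftTerm φ χ σ k Q μ) (tubeDom S (Q * t)) := by
  intro p hp
  have hτ : 0 < p.1.im := hp.1
  have hgap : 0 < tubeGap S t Q p := tubeGap_pos hQ hp
  refine ⟨fun m => C * (1 + (p.1.im / 2)⁻¹) ^ κ *
    (m ^ (k.natAbs + κ + 1) * Real.exp (-(π * (tubeGap S t Q p / 2)) * m)),
    (Real.summable_pow_mul_exp_neg_nat_mul _ (by positivity)).mul_left _, ?_⟩
  have him : ContinuousAt (fun q : ℂ × (ι → ℂ) × ℂ => q.1.im) p := by fun_prop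
  filter_upwards [him.eventually_const_lt (half_lt_self hτ),
    (continuousAt_tubeGap t Q hτ.ne').eventually_const_lt (half_lt_self hgap)] with q hqτ hqgap m
  have hq : 0 < q.1.im := (half_pos hτ).trans hqτ
  refine (hφ.norm_liftTerm_le hC hχ σ Q μ m hq).trans ?_
  gcongr

theorem differentiableOn_liftTerm
    (hφ : DifferentiableOn ℂ (fun p : ℂ × (ι → ℂ) => φ p.1 p.2) {p | 0 < p.1.im})
    (σ : ℕ → SL2Z) (Q : ℕ) (μ : ℤ) (m : ℕ) :
    DifferentiableOn ℂ (liftTerm φ χ σ k Q μ m) {p | 0 < p.1.im} := by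
  unfold liftTerm heckeSum
  split_ifs with hm
  · refine .mul (.const_mul (.fun_sum fun a ha => .fun_sum fun b _ => .const_mul ?_ _) _)
      (by fun_prop)
    refine hφ.comp (f := fun p : ℂ × (ι → ℂ) × ℂ =>
      ((a * p.1 + b * Q) / (m / a : ℕ), fun i => a * p.2.1 i)) (by fun_prop) fun p hp => ?_
    have ha0 : 0 < a := Nat.pos_of_mem_divisors ha
    have hd0 : 0 < m / a := Nat.div_pos (Nat.divisor_le ha) ha0
    change 0 < Complex.im _
    rw [im_mul_add_mul_div]
    have hτ : 0 < p.1.im := hp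
    positivity
  · exact differentiableOn_const 0

end LiftingSeries

theorem statement8_general {ι : Type*} [Fintype ι] {S : Matrix ι ι ℤ}
    (hS : (S.map ((↑) : ℤ → ℝ)).PosSemidef) {k : ℤ} {t : ℚ} (ht : 0 ≤ t)
    {χ : SL2Z → ℂ} {ν : (ι → ℤ) → (ι → ℤ) → ℂ} {f : ℚ × (ι → ℚ) → ℂ} {φ : ℂ → (ι → ℂ) → ℂ}
    (hφ : IsJacobiForm S (k : ℚ) t χ ν f φ) {Q : ℕ} (hQ : 0 < Q) (σ : ℕ → SL2Z) (μ : ℤ) :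
    ∃ G : ℂ × (ι → ℂ) × ℂ → ℂ,
      DifferentiableOn ℂ G (tubeDom S ((Q : ℚ) * t)) ∧
      TendstoLocallyUniformlyOn
        (fun (s : Finset ℕ) (p : ℂ × (ι → ℂ) × ℂ) => ∑ m ∈ s, liftTerm φ χ σ k Q μ m p)
        G Filter.atTop (tubeDom S ((Q : ℚ) * t)) ∧
      ∀ p ∈ tubeDom S ((Q : ℚ) * t),
        Summable (fun m : ℕ => ‖liftTerm φ χ σ k Q μ m p‖) ∧
        HasSum (fun m : ℕ => liftTerm φ χ σ k Q μ m p) (G p) := by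
  obtain ⟨C, hC, hgrowth⟩ := hφ.exists_hasModerateGrowth hS ht
  have hsummable : NormallySummableOn (liftTerm φ χ σ k Q μ) (tubeDom S (Q * t)) :=
    hgrowth.normallySummableOn_liftTerm hC
      (fun A _ hτ z => (hφ.norm_character_mul_apply A hτ z).le) σ hQ μ
  have hholo (m : ℕ) : DifferentiableOn ℂ (liftTerm φ χ σ k Q μ m) (tubeDom S (Q * t)) :=
    (differentiableOn_liftTerm hφ.holo σ Q μ m).mono fun _ hp => hp.1
  exact ⟨fun p => ∑' m, liftTerm φ χ σ k Q μ m p,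
    hsummable.differentiableOn_tsum (isOpen_tubeDom S _) hholo,
    hsummable.tendstoLocallyUniformlyOn_tsum,
    fun p hp => ⟨hsummable.summable_norm hp, (hsummable.summable_norm hp).of_norm.hasSum⟩⟩

/-- The lifting series
`∑_{m ≥ 1, m ≡ μ (Q)} m⁻¹ (φ|_k T_-^{(Q)}(m))(τ,𝔷) e^{2πi(m/Q)ω}`
converges absolutely and locally uniformly on the tube domain `H(L(Qt))`, and hence defines
a holomorphic function there. -/
theorem statement8 {ι : Type*} [Fintype ι] (S : Matrix ι ι ℤ) (hS : IsEvenPosDef S)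
    (k : ℤ) (t : ℚ) (ht : 0 < t)
    (D : ℕ) (hD2 : Even D) (hD24 : D ∣ 24) (hDpos : 0 < D)
    (Q : ℕ) (hQ : Q = 24 / D)
    (vη : SL2Z → ℂ)
    (hvη : ∀ A : SL2Z, ∀ τ : ℂ, 0 < τ.im →
      dedekindEta (((A.1 0 0 : ℂ) * τ + (A.1 0 1 : ℂ))
            / ((A.1 1 0 : ℂ) * τ + (A.1 1 1 : ℂ))) ^ D
        = vη A * ((A.1 1 0 : ℂ) * τ + (A.1 1 1 : ℂ)) ^ (D / 2) * dedekindEta τ ^ D)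
    (ν : (ι → ℤ) → (ι → ℤ) → ℂ) (hν : ∀ x y, HasFiniteOrder (ν x y))
    (hνtriv : Odd Q → ∀ x y, ν x y = 1)
    (f : ℚ × (ι → ℚ) → ℂ) (φ : ℂ → (ι → ℂ) → ℂ)
    (hφ : IsJacobiForm S (k : ℚ) t vη ν f φ)
    (μ : ℤ) (hμ : IsCoprime μ (Q : ℤ))
    (σ : ℕ → SL2Z) (hσ : ∀ a : ℕ, 0 < a → Nat.Coprime a Q → SigmaCond Q a (σ a)) :
    ∃ G : ℂ × (ι → ℂ) × ℂ → ℂ,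
      DifferentiableOn ℂ G (tubeDom S ((Q : ℚ) * t)) ∧
      TendstoLocallyUniformlyOn
        (fun (s : Finset ℕ) (p : ℂ × (ι → ℂ) × ℂ) => ∑ m ∈ s, liftTerm φ vη σ k Q μ m p)
        G Filter.atTop (tubeDom S ((Q : ℚ) * t)) ∧
      ∀ p ∈ tubeDom S ((Q : ℚ) * t),
        Summable (fun m : ℕ => ‖liftTerm φ vη σ k Q μ m p‖) ∧
        HasSum (fun m : ℕ => liftTerm φ vη σ k Q μ m p) (G p) := by
  exact statement8_general hS.posSemidef ht.le hφ
    (hQ ▸ Nat.div_pos (Nat.le_of_dvd (by norm_num) hD24) hDpos) σ μ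
end
end
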